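/- Let R be a semi-artinian absolutely flat (von Neumann regular) commutative ring. Then the assignments τ(W) = Loc(k(P) : P ∈ W) for a subset W ⊆ Spec R, and σ(L) = {P ∈ Spec R : k(P) ⊗_R L ≠ 0} for a localizing subcategory L of D(R), are mutually inverse, inclusion-preserving bijections between the set of subsets of Spec R and the set of localizing subcategories of D(R). -/

import Mathlib

open CategoryTheory CategoryTheory.Limits CategoryTheory.Pretriangulated CategoryTheory.MonoidalCategory

universe w v u

/-- A commutative ring is absolutely flat (von Neumann regular) if every element `r`
satisfies `r = r ^ 2 * x` for some `x`. -/
def IsAbsolutelyFlat (R : Type u) [CommRing R] : Prop :=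
  ∀ r : R, ∃ x : R, r = r ^ 2 * x

/-- A commutative ring is semi-artinian if every nonzero homomorphic image of `R` in the
category of `R`-modules contains a simple submodule. -/
def IsSemiArtinianRing (R : Type u) [CommRing R] : Prop :=
  ∀ I : Ideal R, I ≠ ⊤ → ∃ S : Submodule R (R ⧸ I), IsSimpleModule R ↥S

/-- A localizing subcategory: a class of objects of a triangulated category closed under
isomorphisms, shifts, cones of morphisms, and arbitrary set-indexed coproducts. -/
structure IsLocalizingSubcategory {T : Type u} [Category.{v} T] [HasZeroObject T]
    [Preadditive T] [HasShift T ℤ] [∀ n : ℤ, (shiftFunctor T n).Additive] [Pretriangulated T]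
    (L : Set T) : Prop where
  mem_of_iso : ∀ {A B : T}, (A ≅ B) → A ∈ L → B ∈ L
  shift_mem : ∀ (A : T) (n : ℤ), A ∈ L → (A⟦n⟧ : T) ∈ L
  cone_mem : ∀ Tr : Triangle T, (Tr ∈ distTriang T) → Tr.obj₁ ∈ L → Tr.obj₂ ∈ L → Tr.obj₃ ∈ L
  coproduct_mem : ∀ {ι : Type w} (f : ι → T), (∀ i, f i ∈ L) →
    ∀ c : Cofan f, IsColimit c → c.pt ∈ L

/-- The smallest localizing subcategory containing a class of objects `S`. -/
def localizingClosure {T : Type u} [Category.{v} T] [HasZeroObject T]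
    [Preadditive T] [HasShift T ℤ] [∀ n : ℤ, (shiftFunctor T n).Additive] [Pretriangulated T]
    (S : Set T) : Set T :=
  ⋂₀ {L : Set T | IsLocalizingSubcategory.{w} L ∧ S ⊆ L}

/-- The residue field `k(P) = R_P` of an absolutely flat ring at a prime `P`, viewed as an
object of the derived category `D(R)`, placed in degree `0`. -/
noncomputable def residueFieldObj (R : Type u) [CommRing R]
    [HasDerivedCategory.{w} (ModuleCat.{u} R)] (P : PrimeSpectrum R) :
    DerivedCategory (ModuleCat.{u} R) :=
  (DerivedCategory.singleFunctor (ModuleCat.{u} R) 0).obj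
    (ModuleCat.of R (Localization.AtPrime P.asIdeal))

/-- Degreewise tensor product `R_P ⊗_R A` of a cochain complex `A` of `R`-modules with the
localization `R_P` (which is flat, so this computes the derived tensor product). -/
noncomputable def tensorResidueField (R : Type u) [CommRing R] (P : PrimeSpectrum R)
    (A : CochainComplex (ModuleCat.{u} R) ℤ) : CochainComplex (ModuleCat.{u} R) ℤ :=
  ((tensorLeft (ModuleCat.of R (Localization.AtPrime P.asIdeal))).mapHomologicalComplex
    (ComplexShape.up ℤ)).obj A



section Tri

variable {T : Type u} [Category.{v} T] [HasZeroObject T]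
    [Preadditive T] [HasShift T ℤ] [∀ n : ℤ, (shiftFunctor T n).Additive] [Pretriangulated T]
    {L : Set T}

namespace IsLocalizingSubcategory

lemma nat_mem (hL : IsLocalizingSubcategory.{w} L) (f : ℕ → T) (hf : ∀ i, f i ∈ L)
    (c : Cofan f) (hc : IsColimit c) : c.pt ∈ L := by
  let c' : Cofan (fun i : ULift.{w} ℕ => f i.down) := Cofan.mk c.pt (fun i => c.inj i.down)
  refine hL.coproduct_mem (fun i : ULift.{w} ℕ => f i.down) (fun i => hf _) c' ?_
  refine Cofan.IsColimit.mk _ (fun s => Cofan.IsColimit.desc hc (fun i => s.inj ⟨i⟩)) ?_ ?_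
  · intro s j
    exact Cofan.IsColimit.fac hc _ _
  · intro s m hm
    refine Cofan.IsColimit.hom_ext hc _ _ (fun i => ?_)
    rw [Cofan.IsColimit.fac]
    exact hm ⟨i⟩

lemma zero_mem (hL : IsLocalizingSubcategory.{w} L) {X : T} (hX : IsZero X) : X ∈ L := by
  let c : Cofan (fun i : PEmpty.{w+1} => (i.elim : T)) := Cofan.mk X (fun i => i.elim)
  refine hL.coproduct_mem (fun i : PEmpty.{w+1} => (i.elim : T)) (fun i => i.elim) c ?_
  exact Cofan.IsColimit.mk _ (fun s => 0) (fun s j => j.elim) (fun s m hm => hX.eq_of_src _ _)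

lemma mem₂ (hL : IsLocalizingSubcategory.{w} L) (Tr : Triangle T) (h : Tr ∈ distTriang T)
    (h1 : Tr.obj₁ ∈ L) (h3 : Tr.obj₃ ∈ L) : Tr.obj₂ ∈ L :=
  hL.cone_mem _ (inv_rot_of_distTriang _ h) (hL.shift_mem _ _ h3) h1

lemma mem₁ (hL : IsLocalizingSubcategory.{w} L) (Tr : Triangle T) (h : Tr ∈ distTriang T)
    (h2 : Tr.obj₂ ∈ L) (h3 : Tr.obj₃ ∈ L) : Tr.obj₁ ∈ L :=
  hL.mem₂ _ (inv_rot_of_distTriang _ h) (hL.shift_mem _ _ h3) h2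

lemma of_shift (hL : IsLocalizingSubcategory.{w} L) (X : T) (n : ℤ) (h : (X⟦n⟧ : T) ∈ L) :
    X ∈ L :=
  hL.mem_of_iso ((shiftEquiv T n).unitIso.app X).symm (hL.shift_mem _ (-n) h)

end IsLocalizingSubcategory

lemma yon2 {X Y Z W : T} {f : X ⟶ Y} {g : Y ⟶ Z} {h : Z ⟶ X⟦(1 : ℤ)⟧}
    (H : Triangle.mk f g h ∈ distTriang T) (c : Y ⟶ W) (hc : f ≫ c = 0) :
    ∃ a : Z ⟶ W, c = g ≫ a := Triangle.yoneda_exact₂ _ H c hc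

lemma yon3 {X Y Z W : T} {f : X ⟶ Y} {g : Y ⟶ Z} {h : Z ⟶ X⟦(1 : ℤ)⟧}
    (H : Triangle.mk f g h ∈ distTriang T) (c : Z ⟶ W) (hc : g ≫ c = 0) :
    ∃ a : X⟦(1 : ℤ)⟧ ⟶ W, c = h ≫ a := Triangle.yoneda_exact₃ _ H c hc

lemma yon1 {X Y Z W : T} {f : X ⟶ Y} {g : Y ⟶ Z} {h : Z ⟶ X⟦(1 : ℤ)⟧}
    (H : Triangle.mk f g h ∈ distTriang T) (c : X⟦(1 : ℤ)⟧ ⟶ W) (hc : h ≫ c = 0) :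
    ∃ a : Y⟦(1 : ℤ)⟧ ⟶ W, c = f⟦(1 : ℤ)⟧' ≫ a := by
  obtain ⟨γ, hγ⟩ := yon3 (rot_of_distTriang _ H) c hc
  exact ⟨-γ, hγ.trans ((Preadditive.neg_comp (f⟦(1 : ℤ)⟧') γ).trans
    (Preadditive.comp_neg (f⟦(1 : ℤ)⟧') γ).symm)⟩

lemma shift_lift {J : Type*} {F : J → T} (c : Cofan F) (hc : IsColimit c) {X : T}
      (a : ∀ j, (F j)⟦(1 : ℤ)⟧ ⟶ X) : ∃ b : c.pt⟦(1 : ℤ)⟧ ⟶ X, ∀ j, (c.inj j)⟦(1 : ℤ)⟧' ≫ b = a j := by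
  have hc' : IsColimit (Cofan.mk (c.pt⟦(1 : ℤ)⟧) (fun j => (c.inj j)⟦(1 : ℤ)⟧')) :=
      Cofan.isColimitMapCoconeEquiv (shiftFunctor T (1 : ℤ)) F c
        (isColimitOfPreserves (shiftFunctor T (1 : ℤ)) hc)
  exact ⟨Cofan.IsColimit.desc hc' a, fun j => Cofan.IsColimit.fac hc' a j⟩

lemma shift_ext {J : Type*} {F : J → T} (c : Cofan F) (hc : IsColimit c) {X : T}
      (a b : c.pt⟦(1 : ℤ)⟧ ⟶ X)
      (hab : ∀ j, (c.inj j)⟦(1 : ℤ)⟧' ≫ a = (c.inj j)⟦(1 : ℤ)⟧' ≫ b) : a = b := by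
  have hc' : IsColimit (Cofan.mk (c.pt⟦(1 : ℤ)⟧) (fun j => (c.inj j)⟦(1 : ℤ)⟧')) :=
      Cofan.isColimitMapCoconeEquiv (shiftFunctor T (1 : ℤ)) F c
        (isColimitOfPreserves (shiftFunctor T (1 : ℤ)) hc)
  exact Cofan.IsColimit.hom_ext hc' _ _ hab

lemma coprodCone_iso {J : Type*} {X Y Z : J → T} (f : ∀ j, X j ⟶ Y j) (g : ∀ j, Y j ⟶ Z j)
    (h : ∀ j, Z j ⟶ (X j)⟦(1 : ℤ)⟧) (hTr : ∀ j, Triangle.mk (f j) (g j) (h j) ∈ distTriang T)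
    (c₁ : Cofan X) (hc₁ : IsColimit c₁) (c₂ : Cofan Y) (hc₂ : IsColimit c₂)
    (c₃ : Cofan Z) (hc₃ : IsColimit c₃)
    (F : c₁.pt ⟶ c₂.pt) (hf : ∀ j, c₁.inj j ≫ F = f j ≫ c₂.inj j)
    {C : T} (u : c₂.pt ⟶ C) (v : C ⟶ c₁.pt⟦(1 : ℤ)⟧) (hT' : Triangle.mk F u v ∈ distTriang T) :
    Nonempty (c₃.pt ≅ C) := by
  have hφ : ∀ j, ∃ φ : Z j ⟶ C, g j ≫ φ = c₂.inj j ≫ u ∧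
      h j ≫ (c₁.inj j)⟦(1 : ℤ)⟧' = φ ≫ v := fun j =>
    complete_distinguished_triangle_morphism _ _ (hTr j) hT' (c₁.inj j) (c₂.inj j) (hf j).symm
  choose φ h1 h2 using hφ
  let Φ : c₃.pt ⟶ C := Cofan.IsColimit.desc hc₃ φ
  have hΦ : ∀ j, c₃.inj j ≫ Φ = φ j := fun j => Cofan.IsColimit.fac hc₃ _ _
  have hfu : F ≫ u = 0 := comp_distTriang_mor_zero₁₂ _ hT'
  have hvf : v ≫ F⟦(1 : ℤ)⟧' = 0 := comp_distTriang_mor_zero₃₁ _ hT'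
  suffices IsIso Φ from ⟨asIso Φ⟩
  refine isIso_of_coyoneda_map_bijective _ (fun W => ⟨?_, ?_⟩)
  · refine (injective_iff_map_eq_zero
      (AddMonoidHom.mk' (fun x : C ⟶ W => Φ ≫ x) (fun a b => by simp))).2 ?_
    intro α hα
    replace hα : Φ ≫ α = 0 := hα
    have hα' : ∀ j, φ j ≫ α = 0 := fun j => by rw [← hΦ, Category.assoc, hα, comp_zero]
    have hu : u ≫ α = 0 := Cofan.IsColimit.hom_ext hc₂ _ _ (fun j => by
      rw [← Category.assoc, ← h1, Category.assoc, hα', comp_zero, comp_zero])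
    obtain ⟨β, hβ⟩ := yon3 hT' α hu
    have key : ∀ j, ∃ γ : (Y j)⟦(1 : ℤ)⟧ ⟶ W,
        (c₁.inj j)⟦(1 : ℤ)⟧' ≫ β = (f j)⟦(1 : ℤ)⟧' ≫ γ := fun j => yon1 (hTr j) _ (by
          rw [← Category.assoc, h2, Category.assoc, ← hβ, hα'])
    choose γ hγ using key
    obtain ⟨k, hk⟩ := shift_lift c₂ hc₂ γ
    have : β = F⟦(1 : ℤ)⟧' ≫ k := shift_ext c₁ hc₁ _ _ (fun j => by
      rw [hγ, ← hk, ← Category.assoc, ← Category.assoc, ← Functor.map_comp, ← Functor.map_comp, hf])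
    rw [hβ, this, ← Category.assoc, hvf, zero_comp]
  · intro a
    let c := Cofan.IsColimit.desc hc₂ (fun j => g j ≫ c₃.inj j ≫ a)
    have hc : ∀ j, c₂.inj j ≫ c = g j ≫ c₃.inj j ≫ a :=
      fun j => Cofan.IsColimit.fac hc₂ _ _
    have hfg : ∀ j, f j ≫ g j = 0 := fun j => comp_distTriang_mor_zero₁₂ _ (hTr j)
    obtain ⟨α', hα'⟩ := yon2 hT' c (Cofan.IsColimit.hom_ext hc₁ _ _ (fun j => by
      rw [← Category.assoc, hf, Category.assoc, hc, ← Category.assoc,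
        hfg, zero_comp, comp_zero]))
    have key : ∀ j, ∃ δ : (X j)⟦(1 : ℤ)⟧ ⟶ W,
        c₃.inj j ≫ a - φ j ≫ α' = h j ≫ δ := fun j =>
      yon3 (hTr j) _ (by
        rw [Preadditive.comp_sub, ← Category.assoc _ (φ j), h1, Category.assoc, ← hα', hc, sub_self])
    choose δ hδ using key
    obtain ⟨d, hd⟩ := shift_lift c₁ hc₁ δ
    refine ⟨α' + v ≫ d, Cofan.IsColimit.hom_ext hc₃ _ _ (fun j => ?_)⟩
    change c₃.inj j ≫ Φ ≫ _ = _
    rw [← Category.assoc, hΦ, Preadditive.comp_add, ← Category.assoc _ v, ← h2, Category.assoc, hd,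
      ← hδ]
    abel

/-- A split short exact sequence gives a distinguished triangle. -/
lemma split_distTriang {X Y Z : T} (a : X ⟶ Y) (p : Y ⟶ Z) (r : Y ⟶ X) (q : Z ⟶ Y)
    (har : a ≫ r = 𝟙 X) (hqp : q ≫ p = 𝟙 Z) (hap : a ≫ p = 0) (hqr : q ≫ r = 0)
    (h : r ≫ a + p ≫ q = 𝟙 Y) : Triangle.mk a p (0 : Z ⟶ X⟦(1 : ℤ)⟧) ∈ distTriang T := by
  refine isomorphic_distinguished _ (binaryBiproductTriangle_distinguished X Z) _ ?_
  let e : Y ≅ X ⊞ Z := ⟨biprod.lift r p, biprod.desc a q, by simp [h], by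
    ext <;> simp [har, hqp, hap, hqr]⟩
  refine Triangle.isoMk _ _ (Iso.refl _) e (Iso.refl _) ?_ ?_ ?_
  · change a ≫ biprod.lift r p = 𝟙 _ ≫ biprod.inl
    ext <;> simp [har, hap]
  · change p ≫ 𝟙 _ = biprod.lift r p ≫ biprod.snd
    simp
  · change (0 : Z ⟶ X⟦(1 : ℤ)⟧) ≫ _ = 𝟙 _ ≫ (0 : Z ⟶ X⟦(1 : ℤ)⟧)
    rw [comp_zero]; exact zero_comp

/-- The telescope of an idempotent `r ≫ i`. -/
lemma telescope [HasCoproductsOfShape ℕ T] {M X : T} (i : M ⟶ X) (r : X ⟶ M) (hir : i ≫ r = 𝟙 M) :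
    Triangle.mk (𝟙 _ - Limits.Sigma.desc (fun n : ℕ => r ≫ i ≫ Limits.Sigma.ι (fun _ : ℕ => X) (n+1)))
      (Limits.Sigma.desc (fun _ : ℕ => r)) (0 : M ⟶ _) ∈ distTriang T := by
  let J := fun n : ℕ => Limits.Sigma.ι (fun _ : ℕ => X) n
  obtain ⟨a, ha⟩ : ∃ a, a = (𝟙 _ - Limits.Sigma.desc (fun n : ℕ => r ≫ i ≫ J (n+1))) := ⟨_, rfl⟩
  change Triangle.mk (𝟙 _ - Limits.Sigma.desc (fun n : ℕ => r ≫ i ≫ J (n+1))) _ _ ∈ _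
  rw [← ha]
  have e1 : ∀ n, J n ≫ a = J n - r ≫ i ≫ J (n+1) := fun n => by
    rw [ha, Preadditive.comp_sub, Category.comp_id, Limits.Sigma.ι_desc]
  have e2 : ∀ n, J n ≫ Limits.Sigma.desc (fun _ : ℕ => r) = r := fun n => Limits.Sigma.ι_desc _ _
  let ρ := Limits.Sigma.desc (fun n : ℕ => (𝟙 X - r ≫ i) ≫ J n
    - ∑ k ∈ Finset.range n, r ≫ i ≫ J k)
  have e3 : ∀ n, J n ≫ ρ = (𝟙 X - r ≫ i) ≫ J n - ∑ k ∈ Finset.range n, r ≫ i ≫ J k :=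
    fun n => Limits.Sigma.ι_desc _ _
  have hri : ∀ {W : T} (f : X ⟶ W), r ≫ i ≫ r ≫ i ≫ f = r ≫ i ≫ f := fun f => by
    rw [reassoc_of% hir]
  refine split_distTriang _ _ ρ (i ≫ J 0) ?_ ?_ ?_ ?_ ?_
  · refine Limits.Sigma.hom_ext _ _ (fun n => ?_)
    change J n ≫ _ ≫ ρ = J n ≫ 𝟙 _
    rw [← Category.assoc, e1]
    simp only [Preadditive.sub_comp, Category.assoc, e3, Preadditive.comp_sub, Preadditive.comp_add,
      Preadditive.comp_sum, hri, Finset.sum_range_succ, Category.comp_id, Category.id_comp]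
    abel
  · rw [Category.assoc, e2, hir]
  · refine Limits.Sigma.hom_ext _ _ (fun n => ?_)
    change J n ≫ _ ≫ _ = J n ≫ _
    rw [← Category.assoc, e1]
    simp only [Preadditive.sub_comp, Category.assoc, e2, hir, Category.comp_id, sub_self, comp_zero]
  · rw [Category.assoc, e3]
    simp only [Finset.range_zero, Finset.sum_empty, Preadditive.comp_sub, Preadditive.sub_comp,
      Category.id_comp, Category.assoc, reassoc_of% hir, sub_self, sub_zero]
  · refine Limits.Sigma.hom_ext _ _ (fun n => ?_)
    change J n ≫ (ρ ≫ _ + _) = J n ≫ 𝟙 _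
    rw [Preadditive.comp_add, ← Category.assoc, e3, ← Category.assoc, e2]
    simp only [Preadditive.sub_comp, Category.assoc, Preadditive.sum_comp, e1, Preadditive.comp_sub,
      hri, Category.comp_id, Category.id_comp]
    have : ∀ m : ℕ, ∑ k ∈ Finset.range m, (r ≫ i ≫ J k -
      r ≫ i ≫ J (k+1)) = r ≫ i ≫ J 0 - r ≫ i ≫ J m := fun m => Finset.sum_range_sub' _ m
    rw [this]
    abel

lemma IsLocalizingSubcategory.retract_mem [HasCoproductsOfShape ℕ T]
    (hL : IsLocalizingSubcategory.{w} L) {M X : T} (i : M ⟶ X) (r : X ⟶ M) (hir : i ≫ r = 𝟙 M)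
    (hX : X ∈ L) : M ∈ L := by
  have : (∐ (fun _ : ℕ => X)) ∈ L :=
    hL.nat_mem _ (fun _ => hX) _ (coproductIsCoproduct (fun _ : ℕ => X))
  exact hL.cone_mem _ (telescope i r hir) this this

lemma IsLocalizingSubcategory.isTri (hL : IsLocalizingSubcategory.{w} L) :
    ObjectProperty.IsTriangulated (show ObjectProperty T from fun X => X ∈ L) where
  exists_zero := ⟨_, isZero_zero T, hL.zero_mem (isZero_zero T)⟩
  isStableUnderShiftBy n := ⟨fun X hX => hL.shift_mem X n hX⟩
  ext₂' Tr h h1 h3 := ⟨_, hL.mem₂ Tr h h1 h3, ⟨Iso.refl _⟩⟩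

lemma IsLocalizingSubcategory.tower [HasCoproductsOfShape ℕ T] [IsTriangulated T]
    (hL : IsLocalizingSubcategory.{w} L) (M : ℕ → T) (g : ∀ n, M n ⟶ M (n+1))
    (hg : ∀ n, ∃ (F : T) (f : F ⟶ M n) (h : M (n+1) ⟶ F⟦(1 : ℤ)⟧), F ∈ L ∧
      Triangle.mk f (g n) h ∈ distTriang T)
    (hiso : IsIso (𝟙 (∐ M) - Limits.Sigma.desc (fun n => g n ≫ Limits.Sigma.ι M (n+1)))) : M 0 ∈ L := by
  let P : ObjectProperty T := fun X => X ∈ L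
  have hP : P.IsTriangulated := hL.isTri
  have hPi : P.IsClosedUnderIsomorphisms := ⟨fun e h => hL.mem_of_iso e h⟩
  let b : ∀ n, M 0 ⟶ M n := fun n => Nat.rec (𝟙 _) (fun n f => f ≫ g n) n
  have hb : ∀ n, P.trW (b n) := by
    intro n
    induction n with
    | zero => exact P.trW.id_mem _
    | succ n ih =>
      refine P.trW.comp_mem _ _ ih ?_
      obtain ⟨F, f, h, hF, H⟩ := hg n
      exact (P.trW_iff_of_distinguished' _ H).2 hF
  choose C p q hT hC using hb
  let B : (∐ fun _ : ℕ => M 0) ⟶ ∐ M := Limits.Sigma.desc (fun n => b n ≫ Limits.Sigma.ι M n)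
  have hB : P.trW B := by
    obtain ⟨Z, u, v, H⟩ := distinguished_cocone_triangle B
    obtain ⟨e⟩ := coprodCone_iso b p q hT _ (coproductIsCoproduct (fun _ : ℕ => M 0)) _
      (coproductIsCoproduct M) _ (coproductIsCoproduct C) B
      (fun j => Limits.Sigma.ι_desc _ _) u v H
    exact ⟨Z, u, v, H, hL.mem_of_iso e (hL.nat_mem C hC _ (coproductIsCoproduct C))⟩
  let A : (∐ fun _ : ℕ => M 0) ⟶ ∐ fun _ : ℕ => M 0 :=
    (𝟙 _ - Limits.Sigma.desc (fun n : ℕ => 𝟙 _ ≫ 𝟙 _ ≫ Limits.Sigma.ι (fun _ : ℕ => M 0) (n+1)))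
  have hAT := telescope (𝟙 (M 0)) (𝟙 (M 0)) (Category.id_comp _)
  have hAB : A ≫ B = B ≫ (𝟙 (∐ M) - Limits.Sigma.desc (fun n => g n ≫ Limits.Sigma.ι M (n+1))) := by
    refine Limits.Sigma.hom_ext _ _ (fun n => ?_)
    have e1 : Limits.Sigma.ι (fun _ : ℕ => M 0) n ≫ A = Limits.Sigma.ι (fun _ : ℕ => M 0) n -
        Limits.Sigma.ι (fun _ : ℕ => M 0) (n+1) := by
      simp only [A, Preadditive.comp_sub, Category.comp_id, Limits.Sigma.ι_desc, Category.id_comp]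
    have e2 : ∀ n, Limits.Sigma.ι (fun _ : ℕ => M 0) n ≫ B = b n ≫ Limits.Sigma.ι M n :=
      fun n => Limits.Sigma.ι_desc _ _
    have e3 : b (n+1) = b n ≫ g n := rfl
    rw [← Category.assoc, e1, Preadditive.sub_comp, e2, e2, ← Category.assoc, e2, e3]
    simp only [Category.assoc, Preadditive.comp_sub, Limits.Sigma.ι_desc, Category.comp_id]
  have hABm : P.trW (A ≫ B) := by
    rw [hAB]
    exact P.trW.comp_mem _ _ hB (P.trW_of_isIso _)
  obtain ⟨Z, u, v, H, hZ⟩ := hB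
  obtain ⟨Z', u', v', H', hZ'⟩ := hABm
  exact hL.mem₁ _ (Triangulated.someOctahedron rfl hAT H H').mem hZ' hZ

end Tri

section Elem

variable {R : Type u} [CommRing R]

abbrev Ch (R : Type u) [CommRing R] := CochainComplex (ModuleCat.{u} R) ℤ

lemma cyc_lift (K : Ch R) (n m : ℤ) (hm : n + 1 = m) (x : K.X n) (hx : K.d n m x = 0) :
    ∃ z : K.cycles n, K.iCycles n z = x := by
  have h := ShortComplex.exact_of_f_is_kernel (ShortComplex.mk (K.iCycles n) (K.d n m) (by simp))
    (K.cyclesIsKernel n m (by simp [hm]))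
  rw [ShortComplex.moduleCat_exact_iff] at h
  exact h x hx

lemma d_iCycles (K : Ch R) (n m : ℤ) (z : K.cycles n) : K.d n m (K.iCycles n z) = 0 := by
  rw [← ConcreteCategory.comp_apply]
  simp

lemma iCycles_inj (K : Ch R) (n : ℤ) : Function.Injective (K.iCycles n) :=
  (ModuleCat.mono_iff_injective _).1 inferInstance

lemma pi_surj (K : Ch R) (n : ℤ) : Function.Surjective (K.homologyπ n) :=
  (ModuleCat.epi_iff_surjective _).1 inferInstance

lemma pi_eq_zero (K : Ch R) (l n : ℤ) (hl : l + 1 = n) (z : K.cycles n) :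
    K.homologyπ n z = 0 ↔ ∃ y : K.X l, K.d l n y = K.iCycles n z := by
  have h := ShortComplex.exact_of_g_is_cokernel (ShortComplex.mk (K.toCycles l n) (K.homologyπ n) (by simp))
    (K.homologyIsCokernel l n (by simp [← hl]))
  rw [ShortComplex.moduleCat_exact_iff] at h
  constructor
  · intro hz
    obtain ⟨y, hy⟩ := h z hz
    exact ⟨y, by rw [← hy]; dsimp; rw [← ConcreteCategory.comp_apply, K.toCycles_i]⟩
  · rintro ⟨y, hy⟩
    have : z = K.toCycles l n y := iCycles_inj K n (by
      rw [← ConcreteCategory.comp_apply, K.toCycles_i, hy])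
    rw [this, ← ConcreteCategory.comp_apply]
    simp

lemma map_pi {K L : Ch R} (f : K ⟶ L) (n : ℤ) (z : K.cycles n) :
    HomologicalComplex.homologyMap f n (K.homologyπ n z) =
      L.homologyπ n (HomologicalComplex.cyclesMap f n z) := by
  rw [← ConcreteCategory.comp_apply, ← ConcreteCategory.comp_apply,
    HomologicalComplex.homologyπ_naturality]

lemma i_map {K L : Ch R} (f : K ⟶ L) (n : ℤ) (z : K.cycles n) :
    L.iCycles n (HomologicalComplex.cyclesMap f n z) = f.f n (K.iCycles n z) := by
  rw [← ConcreteCategory.comp_apply, ← ConcreteCategory.comp_apply,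
    HomologicalComplex.cyclesMap_i]

lemma f_d {K L : Ch R} (f : K ⟶ L) (n m : ℤ) (x : K.X n) :
    L.d n m (f.f n x) = f.f m (K.d n m x) := by
  rw [← ConcreteCategory.comp_apply, ← ConcreteCategory.comp_apply, f.comm]

lemma d_d (K : Ch R) (n m l : ℤ) (x : K.X n) :
    K.d m l (K.d n m x) = 0 := by
  rw [← ConcreteCategory.comp_apply]; simp

/-- elementwise description of the kernel of `H(f)` being everything. -/
lemma homologyMap_eq_zero_iff {K L : Ch R} (f : K ⟶ L) (l n m : ℤ) (hl : l + 1 = n) (hm : n + 1 = m) :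
    HomologicalComplex.homologyMap f n = 0 ↔
      ∀ x : K.X n, K.d n m x = 0 → ∃ y : L.X l, L.d l n y = f.f n x := by
  constructor
  · intro h x hx
    obtain ⟨z, rfl⟩ := cyc_lift K n m hm x hx
    have := map_pi f n z
    rw [h] at this
    obtain ⟨y, hy⟩ := (pi_eq_zero L l n hl _).1 this.symm
    exact ⟨y, by rw [hy, i_map]⟩
  · intro h
    ext w
    obtain ⟨z, rfl⟩ := pi_surj K n w
    refine (map_pi f n z).trans ?_
    refine (pi_eq_zero L l n hl _).2 ?_
    rw [i_map]
    exact h _ (d_iCycles _ _ _ _)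

lemma homologyMap_inj_iff {K L : Ch R} (f : K ⟶ L) (l n m : ℤ) (hl : l + 1 = n) (hm : n + 1 = m) :
    Function.Injective (HomologicalComplex.homologyMap f n) ↔
      ∀ (x : K.X n) (y : L.X l), K.d n m x = 0 → L.d l n y = f.f n x → ∃ w : K.X l, K.d l n w = x := by
  constructor
  · intro h x y hx hy
    obtain ⟨z, rfl⟩ := cyc_lift K n m hm x hx
    refine (pi_eq_zero K l n hl z).1 (h ?_)
    rw [map_zero, map_pi]
    exact (pi_eq_zero L l n hl _).2 ⟨y, by rw [hy, i_map]⟩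
  · intro h
    refine (injective_iff_map_eq_zero _).2 ?_
    intro w hw
    obtain ⟨z, rfl⟩ := pi_surj K n w
    rw [map_pi] at hw
    obtain ⟨y, hy⟩ := (pi_eq_zero L l n hl _).1 hw
    rw [i_map] at hy
    exact (pi_eq_zero K l n hl _).2 (h _ y (d_iCycles _ _ _ _) hy)

lemma homologyMap_surj_iff {K L : Ch R} (f : K ⟶ L) (l n m : ℤ) (hl : l + 1 = n) (hm : n + 1 = m) :
    Function.Surjective (HomologicalComplex.homologyMap f n) ↔
      ∀ (y : L.X n), L.d n m y = 0 → ∃ (x : K.X n) (w : L.X l), K.d n m x = 0 ∧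
        y = f.f n x + L.d l n w := by
  constructor
  · intro h y hy
    obtain ⟨z, rfl⟩ := cyc_lift L n m hm y hy
    obtain ⟨w, hw⟩ := h (L.homologyπ n z)
    obtain ⟨z', rfl⟩ := pi_surj K n w
    rw [map_pi] at hw
    have := (pi_eq_zero L l n hl (z - HomologicalComplex.cyclesMap f n z')).1 (by
      rw [map_sub, hw, sub_self])
    obtain ⟨w, hw⟩ := this
    refine ⟨K.iCycles n z', w, d_iCycles _ _ _ _, ?_⟩
    rw [hw, map_sub, i_map]
    abel
  · intro h w
    obtain ⟨z, rfl⟩ := pi_surj L n w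
    obtain ⟨x, w, hx, hw⟩ := h _ (d_iCycles L n m z)
    obtain ⟨z', rfl⟩ := cyc_lift K n m hm x hx
    refine ⟨K.homologyπ n z', ?_⟩
    rw [map_pi, ← sub_eq_zero, ← map_sub]
    refine (pi_eq_zero L l n hl _).2 ⟨-w, ?_⟩
    rw [map_neg, map_sub, i_map, hw]
    abel

lemma quasiIso_iff_elem {K L : Ch R} (f : K ⟶ L) :
    QuasiIso f ↔ ∀ l n m : ℤ, l + 1 = n → n + 1 = m →
      (∀ (x : K.X n) (y : L.X l), K.d n m x = 0 → L.d l n y = f.f n x → ∃ w : K.X l, K.d l n w = x) ∧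
      (∀ (y : L.X n), L.d n m y = 0 → ∃ (x : K.X n) (w : L.X l), K.d n m x = 0 ∧
        y = f.f n x + L.d l n w) := by
  rw [quasiIso_iff]
  constructor
  · intro h l n m hl hm
    have := h n
    rw [quasiIsoAt_iff_isIso_homologyMap] at this
    have := ConcreteCategory.bijective_of_isIso (HomologicalComplex.homologyMap f n)
    exact ⟨(homologyMap_inj_iff f l n m hl hm).1 this.1, (homologyMap_surj_iff f l n m hl hm).1 this.2⟩
  · intro h n
    rw [quasiIsoAt_iff_isIso_homologyMap, ConcreteCategory.isIso_iff_bijective]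
    have := h (n-1) n (n+1) (by simp) rfl
    exact ⟨(homologyMap_inj_iff f _ n _ (by simp) rfl).2 this.1,
      (homologyMap_surj_iff f _ n _ (by simp) rfl).2 this.2⟩

end Elem

section Coprod

variable {R : Type u} [CommRing R] {J : Type u}

open Classical in
lemma cofan_elem {X : J → Ch R} (c : Cofan X) (hc : IsColimit c) :
    ∃ π : ∀ j, c.pt ⟶ X j, (∀ j, c.inj j ≫ π j = 𝟙 _) ∧ (∀ i j, i ≠ j → c.inj i ≫ π j = 0) ∧
      ∀ (n : ℤ) (x : c.pt.X n), ∃ s : Finset J,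
        x = ∑ j ∈ s, (c.inj j).f n ((π j).f n x) := by
  let π : ∀ j, c.pt ⟶ X j := fun j => Cofan.IsColimit.desc hc
    (fun i => if h : i = j then eqToHom (by rw [h]) else 0)
  have h1 : ∀ j, c.inj j ≫ π j = 𝟙 _ := fun j => by simp [π]
  have h2 : ∀ i j, i ≠ j → c.inj i ≫ π j = 0 := fun i j h => by simp [π, h]
  refine ⟨π, h1, h2, fun n x => ?_⟩
  have h1' : ∀ j (y : (X j).X n), (π j).f n ((c.inj j).f n y) = y := fun j y => by
    rw [← ConcreteCategory.comp_apply, ← HomologicalComplex.comp_f, h1]; simp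
  have h2' : ∀ i j (y : (X i).X n), i ≠ j → (π j).f n ((c.inj i).f n y) = 0 := fun i j y h => by
    rw [← ConcreteCategory.comp_apply, ← HomologicalComplex.comp_f, h2 _ _ h]; simp
  have hcn : IsColimit (Cofan.mk (c.pt.X n) (fun j => (c.inj j).f n)) :=
    Cofan.isColimitMapCoconeEquiv (HomologicalComplex.eval _ _ n) X c
      (isColimitOfPreserves (HomologicalComplex.eval _ _ n) hc)
  let S : Submodule R (c.pt.X n) := ⨆ j, LinearMap.range ((c.inj j).f n).hom
  have hS : S = ⊤ := by
    have : ModuleCat.ofHom S.mkQ = 0 := Cofan.IsColimit.hom_ext hcn _ _ (fun j => by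
      ext y
      simp only [comp_zero]
      change S.mkQ ((c.inj j).f n y) = 0
      rw [Submodule.mkQ_apply, Submodule.Quotient.mk_eq_zero]
      exact Submodule.mem_iSup_of_mem j ⟨y, rfl⟩)
    rw [← Submodule.ker_mkQ S, LinearMap.ker_eq_top]
    exact congrArg ModuleCat.Hom.hom this
  have hx : x ∈ S := hS ▸ Submodule.mem_top
  refine Submodule.iSup_induction (p := fun j => LinearMap.range ((c.inj j).f n).hom)
    (motive := fun x => ∃ s : Finset J, x = ∑ j ∈ s, (c.inj j).f n ((π j).f n x)) hx ?_ ?_ ?_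
  · rintro j _ ⟨y, rfl⟩
    refine ⟨{j}, ?_⟩
    rw [Finset.sum_singleton]
    exact congrArg ((c.inj j).f n) (h1' j y).symm
  · exact ⟨∅, by simp⟩
  · rintro x y ⟨s, hs⟩ ⟨t, ht⟩
    have ext : ∀ (x : c.pt.X n) (s : Finset J), x = ∑ j ∈ s, (c.inj j).f n ((π j).f n x) →
        ∀ k ∉ s, (π k).f n x = 0 := by
      intro x s hs k hk
      rw [hs, map_sum]
      exact Finset.sum_eq_zero (fun j hj => h2' _ _ _ (fun h => hk (h ▸ hj)))
    refine ⟨s ∪ t, ?_⟩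
    simp only [map_add, Finset.sum_add_distrib]
    congr 1
    · rw [← Finset.sum_subset Finset.subset_union_left]
      · exact hs
      · intro k _ hk
        rw [ext x s hs k hk, map_zero]
    · rw [← Finset.sum_subset Finset.subset_union_right]
      · exact ht
      · intro k _ hk
        rw [ext y t ht k hk, map_zero]

lemma coprod_quasiIso {X Y : J → Ch R} (c : Cofan X) (hc : IsColimit c) (d : Cofan Y)
    (hd : IsColimit d) (s : ∀ j, X j ⟶ Y j) (hs : ∀ j, QuasiIso (s j)) (S : c.pt ⟶ d.pt)
    (hS : ∀ j, c.inj j ≫ S = s j ≫ d.inj j) : QuasiIso S := by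
  obtain ⟨π, h1, h2, h3⟩ := cofan_elem c hc
  obtain ⟨ρ, k1, k2, k3⟩ := cofan_elem d hd
  simp only [quasiIso_iff_elem] at hs
  have hS' : ∀ j, S ≫ ρ j = π j ≫ s j := fun j => Cofan.IsColimit.hom_ext hc _ _ (fun i => by
    rw [← Category.assoc, hS, Category.assoc, ← Category.assoc (c.inj i)]
    by_cases h : i = j
    · subst h
      rw [k1, h1, Category.comp_id, Category.id_comp]
    · rw [k2 _ _ h, h2 _ _ h, comp_zero, zero_comp])
  rw [quasiIso_iff_elem]
  intro l n m hl hm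
  refine ⟨fun x y hx hy => ?_, fun y hy => ?_⟩
  · have : ∀ j, ∃ w, (X j).d l n w = (π j).f n x := fun j =>
      ((hs j) l n m hl hm).1 _ ((ρ j).f l y) (by rw [f_d, hx, map_zero]) (by
        rw [f_d, hy, ← ConcreteCategory.comp_apply, ← HomologicalComplex.comp_f, hS',
          HomologicalComplex.comp_f, ConcreteCategory.comp_apply])
    choose w hw using this
    obtain ⟨s, hs⟩ := h3 n x
    refine ⟨∑ j ∈ s, (c.inj j).f l (w j), ?_⟩
    rw [map_sum, hs]
    refine Finset.sum_congr rfl (fun j _ => ?_)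
    rw [f_d, hw]
  · have : ∀ j, ∃ x w, (X j).d n m x = 0 ∧ (ρ j).f n y = (s j).f n x + (Y j).d l n w := fun j =>
      ((hs j) l n m hl hm).2 _ (by rw [f_d, hy, map_zero])
    choose x w hx hw using this
    obtain ⟨t, ht⟩ := k3 n y
    refine ⟨∑ j ∈ t, (c.inj j).f n (x j), ∑ j ∈ t, (d.inj j).f l (w j), ?_, ?_⟩
    · rw [map_sum]
      exact Finset.sum_eq_zero (fun j _ => by rw [f_d, hx, map_zero])
    · rw [map_sum, map_sum, ← Finset.sum_add_distrib]
      conv_lhs => rw [ht]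
      refine Finset.sum_congr rfl (fun j _ => ?_)
      rw [hw, map_add, f_d]
      congr 1
      rw [← ConcreteCategory.comp_apply, ← ConcreteCategory.comp_apply, ← HomologicalComplex.comp_f,
        ← HomologicalComplex.comp_f, hS]

lemma coprod_homology_ext {X : J → Ch R} (c : Cofan X) (hc : IsColimit c) (n : ℤ)
    {M : ModuleCat.{u} R} (a b : c.pt.homology n ⟶ M)
    (h : ∀ j, HomologicalComplex.homologyMap (c.inj j) n ≫ a =
      HomologicalComplex.homologyMap (c.inj j) n ≫ b) : a = b := by
  obtain ⟨π, h1, h2, h3⟩ := cofan_elem c hc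
  ext w
  obtain ⟨z, rfl⟩ := pi_surj _ n w
  obtain ⟨s, hs⟩ := h3 n (c.pt.iCycles n z)
  have : z = ∑ j ∈ s, HomologicalComplex.cyclesMap (c.inj j) n
      (HomologicalComplex.cyclesMap (π j) n z) := by
    refine iCycles_inj _ n ?_
    rw [hs, map_sum]
    refine Finset.sum_congr rfl (fun j _ => ?_)
    rw [i_map, i_map]
  change a _ = b _
  rw [this]
  simp only [map_sum]
  refine Finset.sum_congr rfl (fun j _ => ?_)
  rw [← map_pi]
  exact congrArg (fun f => f ((X j).homologyπ n (HomologicalComplex.cyclesMap (π j) n z))) (h j)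

end Coprod

section DR

variable {R : Type u} [CommRing R] [HasDerivedCategory.{w} (ModuleCat.{u} R)]

abbrev DD (R : Type u) [CommRing R] [HasDerivedCategory.{w} (ModuleCat.{u} R)] :=
  DerivedCategory (ModuleCat.{u} R)

abbrev QQ (R : Type u) [CommRing R] [HasDerivedCategory.{w} (ModuleCat.{u} R)] : Ch R ⥤ DD R :=
  DerivedCategory.Q

noncomputable abbrev HH (R : Type u) [CommRing R] [HasDerivedCategory.{w} (ModuleCat.{u} R)] (n : ℤ) :
    DD R ⥤ ModuleCat.{u} R :=
  DerivedCategory.homologyFunctor _ n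

noncomputable def phi (n : ℤ) (X : Ch R) : X.homology n ≅ (HH R n).obj ((QQ R).obj X) :=
  ((DerivedCategory.homologyFunctorFactors (ModuleCat.{u} R) n).app X).symm

lemma phi_nat (n : ℤ) {K L : Ch R} (f : K ⟶ L) :
    HomologicalComplex.homologyMap f n ≫ (phi n L).hom = (phi n K).hom ≫ (HH R n).map ((QQ R).map f) :=
  (DerivedCategory.homologyFunctorFactors (ModuleCat.{u} R) n).inv.naturality f

lemma HH_zero_iff (n : ℤ) {K L : Ch R} (f : K ⟶ L) :
    (HH R n).map ((QQ R).map f) = 0 ↔ HomologicalComplex.homologyMap f n = 0 := by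
  rw [← cancel_epi (phi n K).hom, ← phi_nat, comp_zero, ← zero_comp (f := (phi n L).hom),
    cancel_mono]

lemma Q_homology_ext {J : Type u} {X : J → Ch R} (c : Cofan X) (hc : IsColimit c) (n : ℤ)
    {M : ModuleCat.{u} R} (a b : (HH R n).obj ((QQ R).obj c.pt) ⟶ M)
    (h : ∀ j, (HH R n).map ((QQ R).map (c.inj j)) ≫ a = (HH R n).map ((QQ R).map (c.inj j)) ≫ b) :
    a = b := by
  rw [← cancel_epi (phi n c.pt).hom]
  refine coprod_homology_ext c hc n _ _ (fun j => ?_)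
  rw [← Category.assoc, ← Category.assoc, phi_nat, Category.assoc, Category.assoc, h]

lemma Q_weak {J : Type u} {X : J → Ch R} (c : Cofan X) (hc : IsColimit c) {Y : DD R}
    (a : ∀ j, (QQ R).obj (X j) ⟶ Y) :
    ∃ b : (QQ R).obj c.pt ⟶ Y, ∀ j, (QQ R).map (c.inj j) ≫ b = a j := by
  obtain ⟨Y0, ⟨e⟩⟩ : ∃ Y0, Nonempty ((QQ R).obj Y0 ≅ Y) := ⟨_, ⟨(QQ R).objObjPreimageIso Y⟩⟩
  have := fun j => DerivedCategory.right_fac (a j ≫ e.inv)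
  choose X' s hs g hg using this
  let d := Cofan.mk _ (Limits.Sigma.ι X')
  have hd : IsColimit d := coproductIsCoproduct X'
  let S : d.pt ⟶ c.pt := Cofan.IsColimit.desc hd (fun j => s j ≫ c.inj j)
  have hS : ∀ j, d.inj j ≫ S = s j ≫ c.inj j := fun j => Cofan.IsColimit.fac hd _ _
  have hSq : QuasiIso S := coprod_quasiIso d hd c hc s
    (fun j => (DerivedCategory.isIso_Q_map_iff_quasiIso _ _).1 (hs j)) S hS
  have : IsIso ((QQ R).map S) := (DerivedCategory.isIso_Q_map_iff_quasiIso _ _).2 hSq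
  let G : d.pt ⟶ Y0 := Cofan.IsColimit.desc hd g
  have hG : ∀ j, d.inj j ≫ G = g j := fun j => Cofan.IsColimit.fac hd _ _
  refine ⟨inv ((QQ R).map S) ≫ (QQ R).map G ≫ e.hom, fun j => ?_⟩
  have h1 : (QQ R).map (s j) ≫ (QQ R).map (c.inj j) = (QQ R).map (d.inj j) ≫ (QQ R).map S := by
    rw [← Functor.map_comp, ← Functor.map_comp, hS]
  have := hs j
  rw [← cancel_epi ((QQ R).map (s j)), ← Category.assoc, h1]
  have h2 : (QQ R).map (s j) ≫ a j = (QQ R).map (g j) ≫ e.hom := by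
    rw [← cancel_mono e.inv, Category.assoc, hg]
    simp
  rw [h2]
  simp only [Category.assoc, IsIso.hom_inv_id_assoc]
  rw [← Category.assoc, ← Functor.map_comp, hG]

lemma isIso_of_homology_id {X : DD R} (e : X ⟶ X) (h : ∀ n, (HH R n).map e = 𝟙 _) : IsIso e := by
  rw [DerivedCategory.isIso_iff]
  intro n
  rw [h]
  infer_instance

/-- `Q` preserves coproducts. -/
noncomputable def Q_isColimit {J : Type u} {X : J → Ch R} (c : Cofan X) (hc : IsColimit c) :
    IsColimit (Cofan.mk ((QQ R).obj c.pt) (fun j => (QQ R).map (c.inj j))) := by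
  have uniq : ∀ {Y : DD R} (b b' : (QQ R).obj c.pt ⟶ Y),
      (∀ j, (QQ R).map (c.inj j) ≫ b = (QQ R).map (c.inj j) ≫ b') → b = b' := by
    intro Y b b' h
    rw [← sub_eq_zero]
    obtain ⟨K, k, q, hT⟩ := distinguished_cocone_triangle₁ (b - b')
    have : ∀ j, ∃ l : (QQ R).obj (X j) ⟶ K, (QQ R).map (c.inj j) = l ≫ k := fun j =>
      Triangle.coyoneda_exact₂ _ hT _ (by
        change (QQ R).map (c.inj j) ≫ (b - b') = 0
        rw [Preadditive.comp_sub, h, sub_self])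
    choose l hl using this
    obtain ⟨m, hm⟩ := Q_weak c hc l
    have hiso : IsIso (m ≫ k) := isIso_of_homology_id _ (fun n =>
      Q_homology_ext c hc n _ _ (fun j => by
        rw [← Functor.map_comp, ← Category.assoc, hm, ← hl, Category.comp_id]))
    have h0 : k ≫ (b - b') = 0 := comp_distTriang_mor_zero₁₂ _ hT
    rw [← cancel_epi (m ≫ k), Category.assoc, h0, comp_zero, comp_zero]
  exact Cofan.IsColimit.mk _ (fun s => (Q_weak c hc s.inj).choose)
    (fun s j => (Q_weak c hc s.inj).choose_spec j)
    (fun s m hm => uniq _ _ (fun j => (hm j).trans ((Q_weak c hc s.inj).choose_spec j).symm))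

lemma D_exists_cofan {J : Type u} (X : J → DD R) :
    ∃ (X0 : J → Ch R) (e : ∀ j, (QQ R).obj (X0 j) ≅ X j),
      Nonempty (IsColimit (Cofan.mk ((QQ R).obj (∐ X0))
        (fun j => (e j).inv ≫ (QQ R).map (Limits.Sigma.ι X0 j)))) := by
  refine ⟨fun j => (QQ R).objPreimage (X j), fun j => (QQ R).objObjPreimageIso (X j), ⟨?_⟩⟩
  have H := Q_isColimit _ (coproductIsCoproduct (fun j => (QQ R).objPreimage (X j)))
  refine Cofan.IsColimit.mk _
    (fun s => Cofan.IsColimit.desc H (fun j => ((QQ R).objObjPreimageIso (X j)).hom ≫ s.inj j)) ?_ ?_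
  · intro s j
    have := Cofan.IsColimit.fac H (fun j => ((QQ R).objObjPreimageIso (X j)).hom ≫ s.inj j) j
    change (((QQ R).objObjPreimageIso (X j)).inv ≫ _) ≫ _ = _
    rw [Category.assoc]
    refine (congrArg _ this).trans ?_
    simp
  · intro s m hm
    refine Cofan.IsColimit.hom_ext H _ _ (fun j => ?_)
    rw [Cofan.IsColimit.fac H]
    have := hm j
    rw [← this]
    change _ = _ ≫ (((QQ R).objObjPreimageIso (X j)).inv ≫ _) ≫ _
    simp

instance D_hasCoproducts (J : Type u) : HasCoproductsOfShape J (DD R) := by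
  have : ∀ X : J → DD R, HasColimit (Discrete.functor X) := fun X => by
    obtain ⟨X0, e, ⟨h⟩⟩ := D_exists_cofan X
    exact ⟨⟨⟨_, h⟩⟩⟩
  exact ⟨fun F => hasColimit_of_iso (Discrete.natIsoFunctor (F := F))⟩

instance D_hasCoproductsNat : HasCoproductsOfShape ℕ (DD R) :=
  hasColimitsOfShape_of_equivalence (Discrete.equivalence (Equiv.ulift.{u} (α := ℕ)))

lemma D_homology_ext {J : Type u} {X : J → DD R} (c : Cofan X) (hc : IsColimit c) (n : ℤ)
    {M : ModuleCat.{u} R} (a b : (HH R n).obj c.pt ⟶ M)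
    (h : ∀ j, (HH R n).map (c.inj j) ≫ a = (HH R n).map (c.inj j) ≫ b) :
    a = b := by
  obtain ⟨X0, e, ⟨H⟩⟩ := D_exists_cofan X
  let E : (QQ R).obj (∐ X0) ≅ c.pt := H.coconePointUniqueUpToIso hc
  have hE : ∀ j, (QQ R).map (Limits.Sigma.ι X0 j) ≫ E.hom = (e j).hom ≫ c.inj j := fun j => by
    have : ((e j).inv ≫ (QQ R).map (Limits.Sigma.ι X0 j)) ≫ E.hom = c.inj j :=
      IsColimit.comp_coconePointUniqueUpToIso_hom H hc ⟨j⟩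
    rw [← this]; simp
  rw [← cancel_epi ((HH R n).map E.hom)]
  refine Q_homology_ext _ (coproductIsCoproduct X0) n _ _ (fun j => ?_)
  rw [← Category.assoc, ← Category.assoc, ← Functor.map_comp]
  have hE' := hE j
  change (HH R n).map ((QQ R).map (Limits.Sigma.ι X0 j) ≫ E.hom) ≫ _ =
    (HH R n).map ((QQ R).map (Limits.Sigma.ι X0 j) ≫ E.hom) ≫ _
  rw [hE', Functor.map_comp, Category.assoc, Category.assoc, h]

lemma D_homology_ext_nat {X : ℕ → DD R} (n : ℤ)
    {M : ModuleCat.{u} R} (a b : (HH R n).obj (∐ X) ⟶ M)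
    (h : ∀ j, (HH R n).map (Limits.Sigma.ι X j) ≫ a = (HH R n).map (Limits.Sigma.ι X j) ≫ b) :
    a = b := by
  let c' : Cofan (fun i : ULift.{u} ℕ => X i.down) := Cofan.mk (∐ X) (fun i => Limits.Sigma.ι X i.down)
  have hc : IsColimit c' := by
    refine Cofan.IsColimit.mk _ (fun s => Limits.Sigma.desc (fun i => s.inj ⟨i⟩)) ?_ ?_
    · intro s j
      exact Limits.Sigma.ι_desc (f := X) (fun i => s.inj ⟨i⟩) j.down
    · intro s m hm
      refine Limits.Sigma.hom_ext (f := X) _ _ (fun i => ?_)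
      rw [Limits.Sigma.ι_desc]
      exact hm ⟨i⟩
  exact D_homology_ext c' hc n a b (fun j => h j.down)

/-- Lemma G. -/
lemma ghost_mem {L : Set (DD R)} (hL : IsLocalizingSubcategory.{u} L) (𝓜 : Set (DD R))
    (h : ∀ M ∈ 𝓜, ∃ (M' F : DD R) (f : F ⟶ M) (g : M ⟶ M') (k : M' ⟶ F⟦(1 : ℤ)⟧),
      F ∈ L ∧ M' ∈ 𝓜 ∧ (∀ n, (HH R n).map g = 0) ∧ Triangle.mk f g k ∈ distTriang (DD R))
    {M : DD R} (hM : M ∈ 𝓜) : M ∈ L := by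
  choose M' F f g k hF hM' hg hT using fun M : 𝓜 => h M.1 M.2
  let S : ℕ → 𝓜 := fun n => Nat.rec ⟨M, hM⟩ (fun _ X => ⟨M' X, hM' X⟩) n
  refine hL.tower (fun n => (S n).1) (fun n => g (S n)) (fun n => ⟨F (S n), f (S n), k (S n), hF _, hT _⟩) ?_
  refine isIso_of_homology_id _ (fun n => D_homology_ext_nat (X := fun n => (S n).1) n _ _ (fun j => ?_))
  rw [← Functor.map_comp, Preadditive.comp_sub, Limits.Sigma.ι_desc, Functor.map_sub,
    Functor.map_comp _ (g (S j)), hg, zero_comp, sub_zero, Category.comp_id, Category.comp_id]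

end DR

section Tens

variable {R : Type u} [CommRing R]

noncomputable abbrev tF (Y : ModuleCat.{u} R) : Ch R ⥤ Ch R :=
  (tensorLeft Y).mapHomologicalComplex (ComplexShape.up ℤ)

noncomputable def tR (A : Ch R) : ModuleCat.{u} R ⥤ Ch R where
  obj Y := (tF Y).obj A
  map {Y Y'} f :=
    { f := fun i => f ▷ A.X i
      comm' := fun i j _ => (whisker_exchange f (A.d i j)).symm }
  map_id Y := by ext1; exact id_whiskerRight _ _
  map_comp f g := by ext1; exact comp_whiskerRight _ _ _

noncomputable def tREval (A : Ch R) (i : ℤ) :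
    tR A ⋙ HomologicalComplex.eval _ _ i ≅ tensorRight (A.X i) :=
  NatIso.ofComponents (fun Y => Iso.refl _) (fun f => by
    exact (Category.comp_id _).trans (Category.id_comp _).symm)

instance tR_additive (A : Ch R) : (tR A).Additive where
  map_add {X Y f g} := by
    ext i : 1
    exact MonoidalPreadditive.add_whiskerRight _ _

instance tensR_pres (Y : ModuleCat.{u} R) : PreservesColimits (tensorRight Y) :=
  preservesColimits_of_natIso (BraidedCategory.tensorLeftIsoTensorRight Y)

instance tR_pres (A : Ch R) (J : Type u) : PreservesColimitsOfShape (Discrete J) (tR A) := by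
  apply HomologicalComplex.preservesColimitsOfShape_of_eval
  intro i
  exact preservesColimitsOfShape_of_natIso (tREval A i).symm

instance tF_pres (Y : ModuleCat.{u} R) (J : Type u) :
    PreservesColimitsOfShape (Discrete J) (tF Y) := by
  apply HomologicalComplex.preservesColimitsOfShape_of_eval
  intro i
  have e : HomologicalComplex.eval (ModuleCat.{u} R) (ComplexShape.up ℤ) i ⋙ tensorLeft Y ≅
    tF Y ⋙ HomologicalComplex.eval _ _ i := NatIso.ofComponents (fun Y => Iso.refl _) (fun f => by
    exact (Category.comp_id _).trans (Category.id_comp _).symm)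
  exact preservesColimitsOfShape_of_natIso e

lemma smul_tmul_aux {M : Type u} [AddCommGroup M] [Module R M] (I : Ideal R) (e : I)
    (x : TensorProduct R I M) :
    e.1 • x = e ⊗ₜ[R] (TensorProduct.lid R M (I.subtype.rTensor M x)) := by
  induction x using TensorProduct.induction_on with
  | zero => simp
  | tmul i m =>
    rw [LinearMap.rTensor_tmul, TensorProduct.lid_tmul, TensorProduct.smul_tmul',
      ← TensorProduct.smul_tmul]
    congr 1
    ext
    simp [mul_comm]
  | add x y hx hy => simp only [smul_add, hx, hy, map_add, TensorProduct.tmul_add]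

lemma idem_aux2 {N : Type u} [AddCommGroup N] [Module R N] {f : R} {y : N} (hy : f • y = y) (e : R) :
    (e + f - e * f) • y = y := by
  rw [sub_smul, add_smul, mul_smul, hy]; abel

lemma idem_aux1 {N : Type u} [AddCommGroup N] [Module R N] {e : R} {x : N} (hx : e • x = x) (f : R) :
    (e + f - e * f) • x = x := by
  rw [mul_comm e f, sub_smul, add_smul, mul_smul, hx]; abel

lemma fix_aux (hreg : IsAbsolutelyFlat R) {M : Type u} [AddCommGroup M] [Module R M] (I : Ideal R)
    (x : TensorProduct R I M) : ∃ e ∈ I, e • x = x := by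
  induction x using TensorProduct.induction_on with
  | zero => exact ⟨0, I.zero_mem, by simp⟩
  | tmul i m =>
    obtain ⟨y, hy⟩ := hreg i.1
    refine ⟨i.1 * y, I.mul_mem_right _ i.2, ?_⟩
    rw [TensorProduct.smul_tmul']
    congr 1
    ext
    simp only [SetLike.val_smul, smul_eq_mul]
    calc _ = i.1^2*y := by ring
      _ = _ := hy.symm
  | add x y hx hy =>
    obtain ⟨e, he, hx⟩ := hx
    obtain ⟨f, hf, hy⟩ := hy
    refine ⟨e + f - e * f, I.sub_mem (I.add_mem he hf) (I.mul_mem_right _ he), ?_⟩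
    have h1 : (e + f - e * f) • x = x :=
      @idem_aux1 R _ (TensorProduct R I M) TensorProduct.addCommGroup TensorProduct.leftModule e x hx f
    have h2 : (e + f - e * f) • y = y :=
      @idem_aux2 R _ (TensorProduct R I M) TensorProduct.addCommGroup TensorProduct.leftModule f y hy e
    rw [smul_add, h1, h2]

lemma flat_of_reg (hreg : IsAbsolutelyFlat R) (M : Type u) [AddCommGroup M] [Module R M] :
    Module.Flat R M := by
  rw [Module.Flat.iff_rTensor_injective']
  intro I
  rw [injective_iff_map_eq_zero]
  intro x hx
  obtain ⟨e, he, hex⟩ := fix_aux hreg I x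
  rw [← hex, smul_tmul_aux I ⟨e, he⟩ x, hx]
  simp

lemma tR_shortExact (hreg : IsAbsolutelyFlat R) (A : Ch R) {S : ShortComplex (ModuleCat.{u} R)}
    (hS : S.ShortExact) : (S.map (tR A)).ShortExact := by
  apply HomologicalComplex.shortExact_of_degreewise_shortExact
  intro i
  have := flat_of_reg hreg (A.X i)
  exact hS.map_of_exact (tensorRight (A.X i))

end Tens

section ClassC

variable {R : Type u} [CommRing R]

lemma surj_hom (hreg : IsAbsolutelyFlat R) {F Y : ModuleCat.{u} R} (p : F ⟶ Y)
    (hp : Function.Surjective p) (B : Ch R) (n : ℤ) :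
    Function.Surjective (HomologicalComplex.homologyMap ((tR B).map p) n) := by
  rw [homologyMap_surj_iff _ (n-1) n (n+1) (by ring) rfl]
  intro y hy
  have := flat_of_reg hreg Y
  let dd := (B.d n (n+1)).hom
  have hex : Function.Exact (LinearMap.lTensor Y (LinearMap.ker dd).subtype) (LinearMap.lTensor Y dd) :=
    Module.Flat.lTensor_exact Y (LinearMap.exact_subtype_ker_map dd)
  obtain ⟨t, ht⟩ := (hex y).1 hy
  obtain ⟨t', rfl⟩ := LinearMap.rTensor_surjective (LinearMap.ker dd) (g := p.hom) hp t
  refine ⟨LinearMap.lTensor F (LinearMap.ker dd).subtype t', 0, ?_, ?_⟩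
  · change LinearMap.lTensor F dd (LinearMap.lTensor F (LinearMap.ker dd).subtype t') = 0
    rw [← LinearMap.comp_apply, ← LinearMap.lTensor_comp]
    have : dd ∘ₗ (LinearMap.ker dd).subtype = 0 := by ext x; exact x.2
    rw [this]; simp
  · rw [map_zero, add_zero, ← ht]
    change _ = LinearMap.rTensor _ p.hom (LinearMap.lTensor F (LinearMap.ker dd).subtype t')
    rw [← LinearMap.comp_apply, ← LinearMap.comp_apply, LinearMap.lTensor_comp_rTensor,
      LinearMap.rTensor_comp_lTensor]

variable [HasDerivedCategory.{w} (ModuleCat.{u} R)]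

lemma HH_epi (hreg : IsAbsolutelyFlat R) {F Y : ModuleCat.{u} R} (p : F ⟶ Y)
    (hp : Function.Surjective p) (B : Ch R) (n : ℤ) :
    Epi ((HH R n).map ((QQ R).map ((tR B).map p))) := by
  have : Epi (HomologicalComplex.homologyMap ((tR B).map p) n) :=
    (ModuleCat.epi_iff_surjective _).2 (surj_hom hreg p hp B n)
  have h := phi_nat (R := R) n ((tR B).map p)
  rw [← Iso.inv_comp_eq] at h
  rw [← h]
  infer_instance

variable {L : Set (DD R)} {A : Ch R}

def InC (L : Set (DD R)) (A : Ch R) (Y : ModuleCat.{u} R) : Prop := (QQ R).obj ((tR A).obj Y) ∈ L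

lemma InC.iso (hL : IsLocalizingSubcategory.{u} L) {Y Y' : ModuleCat.{u} R} (e : Y ≅ Y') (h : InC L A Y) : InC L A Y' :=
  hL.mem_of_iso ((QQ R).mapIso ((tR A).mapIso e)) h

lemma InC.retract (hL : IsLocalizingSubcategory.{u} L) {Y Y' : ModuleCat.{u} R} (i : Y' ⟶ Y) (r : Y ⟶ Y') (hir : i ≫ r = 𝟙 _)
    (h : InC L A Y) : InC L A Y' :=
  hL.retract_mem ((QQ R).map ((tR A).map i)) ((QQ R).map ((tR A).map r))
    (by rw [← Functor.map_comp, ← Functor.map_comp, hir, CategoryTheory.Functor.map_id, CategoryTheory.Functor.map_id]) h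

lemma InC.coprod (hL : IsLocalizingSubcategory.{u} L) {J : Type u} {Y : J → ModuleCat.{u} R} (c : Cofan Y) (hc : IsColimit c)
    (h : ∀ j, InC L A (Y j)) : InC L A c.pt :=
  hL.coproduct_mem (fun j => (QQ R).obj ((tR A).obj (Y j))) h _
    (Q_isColimit (Cofan.mk ((tR A).obj c.pt) (fun j => (tR A).map (c.inj j)))
      (Cofan.isColimitMapCoconeEquiv (tR A) Y c (isColimitOfPreserves (tR A) hc)))

lemma InC.ses₂ (hL : IsLocalizingSubcategory.{u} L) (hreg : IsAbsolutelyFlat R) {S : ShortComplex (ModuleCat.{u} R)} (hS : S.ShortExact)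
    (h1 : InC L A S.X₁) (h3 : InC L A S.X₃) : InC L A S.X₂ :=
  hL.mem₂ _ (DerivedCategory.triangleOfSES_distinguished (tR_shortExact hreg A hS)) h1 h3

noncomputable def tens_shift_iso (B : Ch R) (Y : ModuleCat.{u} R) :
    (QQ R).obj ((tR (B⟦(1 : ℤ)⟧)).obj Y) ≅ ((QQ R).obj ((tR B).obj Y))⟦(1 : ℤ)⟧ :=
  (QQ R).mapIso (((tF Y).commShiftIso (1 : ℤ)).app B) ≪≫ ((QQ R).commShiftIso (1 : ℤ)).app _

/-- elements fixed by some element of `J`. -/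
def localSub {R : Type u} [CommRing R] (J : Ideal R) (M : Type u) [AddCommGroup M] [Module R M] :
    Submodule R M where
  carrier := {x | ∃ e ∈ J, e • x = x}
  zero_mem' := ⟨0, J.zero_mem, by simp⟩
  add_mem' := by
    rintro x y ⟨e, he, hx⟩ ⟨f, hf, hy⟩
    exact ⟨e + f - e * f, J.sub_mem (J.add_mem he hf) (J.mul_mem_right _ he), by
      rw [smul_add, idem_aux1 hx f, idem_aux2 hy e]⟩
  smul_mem' := by
    rintro r x ⟨e, he, hx⟩
    exact ⟨e, he, by rw [smul_comm, hx]⟩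

lemma tens_shift_mem (hL : IsLocalizingSubcategory.{u} L) {B : Ch R} {Y : ModuleCat.{u} R} (h : (QQ R).obj ((tR B).obj Y) ∈ L) :
    (QQ R).obj ((tR (B⟦(1 : ℤ)⟧)).obj Y) ∈ L :=
  hL.mem_of_iso (tens_shift_iso B Y).symm (hL.shift_mem _ 1 h)

lemma dist_iso_mid {X Y Z Y' : DD R} {f : X ⟶ Y} {g : Y ⟶ Z} {k : Z ⟶ X⟦(1 : ℤ)⟧}
    (hT : Triangle.mk f g k ∈ distTriang (DD R)) (i : Y ≅ Y') :
    Triangle.mk (f ≫ i.hom) (i.inv ≫ g) k ∈ distTriang (DD R) := by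
  refine isomorphic_distinguished _ hT _ ?_
  exact Triangle.isoMk _ _ (Iso.refl _) i.symm (Iso.refl _)
    (show (f ≫ i.hom) ≫ i.inv = 𝟙 _ ≫ f by simp)
    (show (i.inv ≫ g) ≫ 𝟙 _ = i.inv ≫ g by simp)
    (show k ≫ (𝟙 X)⟦(1 : ℤ)⟧' = 𝟙 _ ≫ k by simp)

lemma InC.local (hL : IsLocalizingSubcategory.{u} L) (hreg : IsAbsolutelyFlat R) (J : Ideal R)
    (hJ : ∀ e ∈ J, InC L A (ModuleCat.of R (Ideal.span {e}))) (Y : ModuleCat.{u} R)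
    (hY : ∀ y : Y, ∃ e ∈ J, e • y = y) : InC L A Y := by
  classical
  let 𝓜 : Set (DD R) := {M | ∃ (Y : ModuleCat.{u} R) (B : Ch R), (∀ y : Y, ∃ e ∈ J, e • y = y) ∧
    (∀ e ∈ J, InC L B (ModuleCat.of R (Ideal.span {e}))) ∧ Nonempty ((QQ R).obj ((tR B).obj Y) ≅ M)}
  refine ghost_mem hL 𝓜 ?_ (show _ ∈ 𝓜 from ⟨Y, A, hY, hJ, ⟨Iso.refl _⟩⟩)
  rintro M ⟨Y, B, hY, hB, ⟨i⟩⟩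
  choose e he hey using hY
  let Z : Y → ModuleCat.{u} R := fun y => ModuleCat.of R (Ideal.span {e y})
  let F := ModuleCat.coproductCocone Z
  have hF : IsColimit F := ModuleCat.coproductCoconeIsColimit Z
  have hFC : InC L B F.pt := InC.coprod hL F hF (fun y => hB _ (he y))
  let q : ∀ y, Z y ⟶ Y := fun y =>
    ModuleCat.ofHom ((LinearMap.toSpanSingleton R Y y) ∘ₗ (Ideal.span {e y}).subtype)
  let p : F.pt ⟶ Y := Cofan.IsColimit.desc hF q
  have hp : Function.Surjective p := fun y => by
    refine ⟨F.inj y ⟨e y, Ideal.mem_span_singleton_self _⟩, ?_⟩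
    rw [← ConcreteCategory.comp_apply, Cofan.IsColimit.fac]
    exact hey y
  have hloc : ∀ x : F.pt, ∃ e ∈ J, e • x = x := by
    let N := localSub J F.pt
    have h0 : ModuleCat.ofHom N.mkQ = 0 := Cofan.IsColimit.hom_ext hF _ _ (fun y => by
      rw [comp_zero]
      ext z
      change N.mkQ (F.inj y z) = 0
      rw [Submodule.mkQ_apply, Submodule.Quotient.mk_eq_zero]
      obtain ⟨x, hx⟩ := hreg (e y)
      refine ⟨e y * x, J.mul_mem_right _ (he y), ?_⟩
      rw [← map_smul]
      congr 1
      obtain ⟨z, hz⟩ := z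
      obtain ⟨b, rfl⟩ := Ideal.mem_span_singleton'.1 hz
      apply Subtype.ext
      change e y * x * (b * e y) = b * e y
      calc _ = b * ((e y)^2 * x) := by ring
        _ = _ := by rw [← hx])
    intro x
    have : N.mkQ x = 0 := congrArg (fun f : F.pt ⟶ ModuleCat.of R (F.pt ⧸ N) => f x) h0
    rw [Submodule.mkQ_apply, Submodule.Quotient.mk_eq_zero] at this
    exact this
  have hS := LinearMap.shortExact_shortComplexKer (f := p.hom) hp
  have hT := DerivedCategory.triangleOfSES_distinguished (tR_shortExact hreg B hS)
  obtain ⟨T, hTeq⟩ : ∃ T, T = p.hom.shortComplexKer := ⟨_, rfl⟩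
  have hk : ∀ y : ModuleCat.of R (LinearMap.ker p.hom), ∃ e ∈ J, e • y = y := fun y => by
    obtain ⟨e, he, hy⟩ := hloc y.1
    exact ⟨e, he, Subtype.ext hy⟩
  obtain ⟨f, g, k, hfe, hT⟩ : ∃ (f : (QQ R).obj ((tR B).obj F.pt) ⟶ (QQ R).obj ((tR B).obj Y))
      (g : (QQ R).obj ((tR B).obj Y) ⟶
        ((QQ R).obj ((tR B).obj (ModuleCat.of R (LinearMap.ker p.hom))))⟦(1 : ℤ)⟧)
      (k : ((QQ R).obj ((tR B).obj (ModuleCat.of R (LinearMap.ker p.hom))))⟦(1 : ℤ)⟧ ⟶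
        ((QQ R).obj ((tR B).obj F.pt))⟦(1 : ℤ)⟧), f = (QQ R).map ((tR B).map p) ∧
      Triangle.mk f g k ∈ distTriang (DD R) :=
    ⟨_, _, _, rfl, rot_of_distTriang _ hT⟩
  have hg : ∀ n, (HH R n).map g = 0 := fun n => by
    have := HH_epi hreg p hp B n
    rw [← hfe] at this
    rw [← cancel_epi ((HH R n).map f), ← Functor.map_comp]
    have : f ≫ g = 0 := comp_distTriang_mor_zero₁₂ _ hT
    rw [this]; simp
  refine ⟨_, _, f ≫ i.hom, i.inv ≫ g, k, hFC, ⟨ModuleCat.of R (LinearMap.ker p.hom), B⟦(1 : ℤ)⟧, hk,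
    fun e he => tens_shift_mem hL (hB e he), ⟨tens_shift_iso _ _⟩⟩, fun n => ?_, ?_⟩
  · rw [Functor.map_comp, hg, comp_zero]
  · exact dist_iso_mid hT i

noncomputable def tR_unit (A : Ch R) : (tR A).obj (ModuleCat.of R R) ≅ A :=
  HomologicalComplex.Hom.isoOfComponents (fun i => λ_ (A.X i)) (fun i j _ =>
    (leftUnitor_naturality (A.d i j)).symm)

lemma InC.zero (hL : IsLocalizingSubcategory.{u} L) {Y : ModuleCat.{u} R} (hY : IsZero Y) :
    InC L A Y :=
  hL.zero_mem ((QQ R).map_isZero ((tR A).map_isZero hY))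

/-- multiplication by `c` as a map between principal ideals. -/
noncomputable def mulMap (r s c : R) (h : c * r ∈ Ideal.span {s}) :
    ModuleCat.of R (Ideal.span {r}) ⟶ ModuleCat.of R (Ideal.span {s}) :=
  ModuleCat.ofHom (LinearMap.codRestrict (Ideal.span {s}) (c • (Ideal.span {r}).subtype) (by
    rintro ⟨z, hz⟩
    obtain ⟨b, rfl⟩ := Ideal.mem_span_singleton'.1 hz
    change c * (b * r) ∈ _
    have : c * (b * r) = b * (c * r) := by ring
    rw [this]
    exact Ideal.mul_mem_left _ _ h))

lemma InC.of_mem_span (hL : IsLocalizingSubcategory.{u} L) (hreg : IsAbsolutelyFlat R) {r s : R}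
    (hs : s ∈ Ideal.span {r}) (h : InC L A (ModuleCat.of R (Ideal.span {r}))) :
    InC L A (ModuleCat.of R (Ideal.span {s})) := by
  obtain ⟨x, hx⟩ := hreg s
  refine InC.retract hL (mulMap s r 1 (by simpa using hs))
    (mulMap r s (s * x) (Ideal.mem_span_singleton.2 ⟨x * r, by ring⟩)) ?_ h
  ext z
  obtain ⟨z, hz⟩ := z
  obtain ⟨b, rfl⟩ := Ideal.mem_span_singleton'.1 hz
  change s * x * (1 * (b * s)) = b * s
  calc _ = b * (s^2*x) := by ring
    _ = _ := by rw [← hx]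

lemma InC.join (hL : IsLocalizingSubcategory.{u} L) (hreg : IsAbsolutelyFlat R) {e f : R}
    (he : e * e = e) (hf : f * f = f) (h1 : InC L A (ModuleCat.of R (Ideal.span {e})))
    (h2 : InC L A (ModuleCat.of R (Ideal.span {f}))) :
    InC L A (ModuleCat.of R (Ideal.span {e + f - e * f})) := by
  have h3 : InC L A (ModuleCat.of R (Ideal.span {f * (1 - e)})) :=
    InC.of_mem_span hL hreg (Ideal.mem_span_singleton.2 ⟨_, rfl⟩) h2
  let S : ShortComplex (ModuleCat.{u} R) := ShortComplex.mk
    (mulMap e (e + f - e * f) 1 (Ideal.mem_span_singleton.2 ⟨e, by linear_combination (f - 1) * he⟩))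
    (mulMap (e + f - e * f) (f * (1 - e)) (1 - e)
      (Ideal.mem_span_singleton.2 ⟨1 - e, by linear_combination (-1) * he⟩)) (by
      ext z
      obtain ⟨z, hz⟩ := z
      obtain ⟨b, rfl⟩ := Ideal.mem_span_singleton'.1 hz
      change (1 - e) * (1 * (b * e)) = 0
      linear_combination (-b) * he)
  refine InC.ses₂ hL hreg (S := S) (ModuleCat.shortComplex_shortExact S ?_ ?_ ?_) h1 h3
  · intro z
    constructor
    · intro h
      have h : (1 - e) * z.1 = 0 := congrArg Subtype.val h
      refine ⟨⟨e * z.1, Ideal.mem_span_singleton.2 ⟨_, rfl⟩⟩, Subtype.ext ?_⟩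
      change 1 * (e * z.1) = z.1
      linear_combination (-1) * h
    · rintro ⟨w, rfl⟩
      exact ConcreteCategory.congr_hom S.zero w
  · intro z w h
    have h : 1 * z.1 = 1 * w.1 := congrArg Subtype.val h
    exact Subtype.ext (by simpa using h)
  · rintro ⟨z, hz⟩
    obtain ⟨b, rfl⟩ := Ideal.mem_span_singleton'.1 hz
    refine ⟨⟨b * (f * (1 - e)), Ideal.mem_span_singleton.2 ⟨b * f * (1 - e), ?_⟩⟩, Subtype.ext ?_⟩
    · linear_combination (b * (e - 1)) * hf - (b * f * (f-1)) * he
    · change (1 - e) * (b * (f * (1 - e))) = b * (f * (1 - e))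
      linear_combination (b * f) * he

/-- the ideal of all `r` with `rR ⊗ A ∈ L`. -/
def idealC (hL : IsLocalizingSubcategory.{u} L) (hreg : IsAbsolutelyFlat R) (A : Ch R) : Ideal R where
  carrier := {r | InC L A (ModuleCat.of R (Ideal.span {r}))}
  zero_mem' := by
    refine InC.zero hL ?_
    have : Subsingleton (ModuleCat.of R (Ideal.span {(0 : R)})) :=
      ⟨fun a b => Subtype.ext (by
        have ha := a.2
        have hb := b.2
        simp only [Ideal.mem_span_singleton, zero_dvd_iff] at ha hb
        rw [ha, hb])⟩
    exact ModuleCat.isZero_of_subsingleton _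
  add_mem' := by
    intro r s hr hs
    obtain ⟨x, hx⟩ := hreg r
    obtain ⟨y, hy⟩ := hreg s
    have h := InC.join hL hreg (e := r * x) (f := s * y) (by linear_combination (-x) * hx)
      (by linear_combination (-y) * hy)
      (InC.of_mem_span hL hreg (Ideal.mem_span_singleton.2 ⟨_, rfl⟩) hr)
      (InC.of_mem_span hL hreg (Ideal.mem_span_singleton.2 ⟨_, rfl⟩) hs)
    refine InC.of_mem_span hL hreg (Ideal.mem_span_singleton.2 ⟨r + s, ?_⟩) h
    linear_combination (1 - s * y) * hx + (1 - r * x) * hy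
  smul_mem' := by
    intro a r hr
    exact InC.of_mem_span hL hreg (Ideal.mem_span_singleton.2 ⟨a, by simp [mul_comm]⟩) hr

lemma one_mem_idealC (hL : IsLocalizingSubcategory.{u} L) (hreg : IsAbsolutelyFlat R) (A : Ch R) :
    (1 : R) ∈ idealC hL hreg A ↔ (QQ R).obj A ∈ L := by
  have e : ModuleCat.of R (Ideal.span {(1 : R)}) ≅ ModuleCat.of R R :=
    LinearEquiv.toModuleIso ((LinearEquiv.ofEq _ _ Ideal.span_singleton_one).trans Submodule.topEquiv)
  have e' : (QQ R).obj ((tR A).obj (ModuleCat.of R (Ideal.span {(1 : R)}))) ≅ (QQ R).obj A :=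
    (QQ R).mapIso ((tR A).mapIso e ≪≫ tR_unit A)
  exact ⟨fun h => hL.mem_of_iso e' h, fun h => hL.mem_of_iso e'.symm h⟩

lemma InC.of_mem (hL : IsLocalizingSubcategory.{u} L) (hreg : IsAbsolutelyFlat R)
    (h : (QQ R).obj A ∈ L) (Y : ModuleCat.{u} R) : InC L A Y :=
  InC.local hL hreg (idealC hL hreg A) (fun _ he => he) Y
    (fun y => ⟨1, (one_mem_idealC hL hreg A).2 h, one_smul _ _⟩)

end ClassC

section Comap

variable {R : Type u} [CommRing R] [HasDerivedCategory.{w} (ModuleCat.{u} R)]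
variable {L : Set (DD R)}

noncomputable abbrev GG (Y : ModuleCat.{u} R) [Module.Flat R Y] : DD R ⥤ DD R :=
  (tensorLeft Y).mapDerivedCategory

noncomputable def GQ (Y : ModuleCat.{u} R) [Module.Flat R Y] (A : Ch R) :
    (GG Y).obj ((QQ R).obj A) ≅ (QQ R).obj ((tR A).obj Y) :=
  (tensorLeft Y).mapDerivedCategoryFactors.app A

lemma comap_loc (hL : IsLocalizingSubcategory.{u} L) (Y : ModuleCat.{u} R) [Module.Flat R Y] :
    IsLocalizingSubcategory.{u} {X : DD R | (GG Y).obj X ∈ L} where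
  mem_of_iso e h := hL.mem_of_iso ((GG Y).mapIso e) h
  shift_mem A n h := hL.mem_of_iso (((GG Y).commShiftIso n).symm.app A) (hL.shift_mem _ n h)
  cone_mem Tr hT h1 h2 := hL.cone_mem _ ((GG Y).map_distinguished Tr hT) h1 h2
  coproduct_mem {J} X h c hc := by
    obtain ⟨X0, e, ⟨H⟩⟩ := D_exists_cofan X
    let E : (QQ R).obj (∐ X0) ≅ c.pt := H.coconePointUniqueUpToIso hc
    refine hL.mem_of_iso ((GQ Y _).symm ≪≫ (GG Y).mapIso E) ?_
    have h0 : ∀ j, (QQ R).obj ((tF Y).obj (X0 j)) ∈ L := fun j =>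
      hL.mem_of_iso ((GG Y).mapIso (e j).symm ≪≫ GQ Y _) (h j)
    exact hL.coproduct_mem _ h0 _
      (Q_isColimit (Cofan.mk ((tF Y).obj (∐ X0)) (fun j => (tF Y).map (Limits.Sigma.ι X0 j)))
        (Cofan.isColimitMapCoconeEquiv (tF Y) X0 _
          (isColimitOfPreserves (tF Y) (coproductIsCoproduct X0))))

lemma single_mem (hL : IsLocalizingSubcategory.{u} L) (Y : ModuleCat.{u} R) (n : ℤ) :
    (QQ R).obj ((HomologicalComplex.single _ (ComplexShape.up ℤ) n).obj Y) ∈ L ↔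
      (DerivedCategory.singleFunctor (ModuleCat.{u} R) 0).obj Y ∈ L := by
  have e1 := (DerivedCategory.singleFunctorIsoCompQ (ModuleCat.{u} R) n).app Y
  have e2 := ((DerivedCategory.singleFunctors (ModuleCat.{u} R)).shiftIso n 0 n (by simp)).app Y
  constructor
  · intro h
    exact hL.mem_of_iso e2 (hL.shift_mem _ n (hL.mem_of_iso e1.symm h))
  · intro h
    exact hL.mem_of_iso e1 (hL.of_shift _ n (hL.mem_of_iso e2.symm h))

lemma gen_univ (hL : IsLocalizingSubcategory.{u} L)
    (h : (DerivedCategory.singleFunctor (ModuleCat.{u} R) 0).obj (ModuleCat.of R R) ∈ L)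
    (X : DD R) : X ∈ L := by
  refine ghost_mem hL Set.univ (fun M _ => ?_) (Set.mem_univ X)
  obtain ⟨B, ⟨i⟩⟩ : ∃ B, Nonempty ((QQ R).obj B ≅ M) := ⟨_, ⟨(QQ R).objObjPreimageIso M⟩⟩
  let J := Σ n : ℤ, {z : B.X n // B.d n (n + 1) z = 0}
  let X0 : J → Ch R := fun j => (HomologicalComplex.single _ (ComplexShape.up ℤ) j.1).obj (ModuleCat.of R R)
  let t : ∀ j : J, ModuleCat.of R R ⟶ B.X j.1 := fun j =>
    ModuleCat.ofHom (LinearMap.toSpanSingleton R (B.X j.1) j.2.1)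
  have ht : ∀ (j : J) (k : ℤ), (ComplexShape.up ℤ).Rel j.1 k → t j ≫ B.d j.1 k = 0 := by
    intro j k hk
    have hk : j.1 + 1 = k := hk
    subst hk
    ext
    change B.d j.1 (j.1 + 1) ((1 : R) • j.2.1) = 0
    rw [one_smul]
    exact j.2.2
  let f0 : ∀ j, X0 j ⟶ B := fun j => HomologicalComplex.mkHomFromSingle (t j) (ht j)
  let f : ∐ X0 ⟶ B := Limits.Sigma.desc f0
  have hF : (QQ R).obj (∐ X0) ∈ L :=
    hL.coproduct_mem (fun j => (QQ R).obj (X0 j)) (fun j => (single_mem hL _ _).2 h) _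
      (Q_isColimit _ (coproductIsCoproduct X0))
  have hf : ∀ n, Epi ((HH R n).map ((QQ R).map f)) := fun n => by
    have : Epi (HomologicalComplex.homologyMap f n) := by
      rw [ModuleCat.epi_iff_surjective, homologyMap_surj_iff f (n-1) n (n+1) (by ring) rfl]
      intro y hy
      let j : J := ⟨n, y, hy⟩
      let o : (X0 j).X n := (HomologicalComplex.singleObjXSelf (ComplexShape.up ℤ) n (ModuleCat.of R R)).inv (1 : R)
      refine ⟨(Limits.Sigma.ι X0 j).f n o, 0, ?_, ?_⟩
      · rw [f_d]
        have : (X0 j).d n (n+1) o = 0 := by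
          rw [HomologicalComplex.single_obj_d]; rfl
        rw [this, map_zero]
      · rw [map_zero, add_zero, ← ConcreteCategory.comp_apply, ← HomologicalComplex.comp_f,
          Limits.Sigma.ι_desc]
        have := HomologicalComplex.mkHomFromSingle_f (t j) (ht j)
        change y = (HomologicalComplex.Hom.f (HomologicalComplex.mkHomFromSingle (t j) (ht j)) j.1) o
        rw [this]
        simp [o, t, j]
    have h := phi_nat (R := R) n f
    rw [← Iso.inv_comp_eq] at h
    rw [← h]
    infer_instance
  obtain ⟨M', g, k, hT⟩ := distinguished_cocone_triangle ((QQ R).map f)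
  refine ⟨M', _, (QQ R).map f ≫ i.hom, i.inv ≫ g, k, hF, Set.mem_univ _, fun n => ?_, dist_iso_mid hT i⟩
  have := hf n
  have h0 : (QQ R).map f ≫ g = 0 := comp_distTriang_mor_zero₁₂ _ hT
  have hg : (HH R n).map g = 0 := by
    rw [← cancel_epi ((HH R n).map ((QQ R).map f)), ← Functor.map_comp, h0]; simp
  rw [Functor.map_comp, hg, comp_zero]

end Comap

section Alg

variable {R : Type u} [CommRing R]

lemma kill_RP (hreg : IsAbsolutelyFlat R) (P : PrimeSpectrum R) {r : R} (hr : r ∈ P.asIdeal) :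
    algebraMap R (Localization.AtPrime P.asIdeal) r = 0 := by
  obtain ⟨x, hx⟩ := hreg r
  have h1 : (1 - r * x) ∉ P.asIdeal := fun h => P.isPrime.ne_top ((Ideal.eq_top_iff_one _).2 (by
    have := Ideal.add_mem _ h (Ideal.mul_mem_right x _ hr)
    simpa using this))
  have hu := IsLocalization.map_units (Localization.AtPrime P.asIdeal)
    (⟨1 - r * x, h1⟩ : P.asIdeal.primeCompl)
  have : algebraMap R (Localization.AtPrime P.asIdeal) (1 - r * x) *
      algebraMap R (Localization.AtPrime P.asIdeal) r = 0 := by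
    rw [← map_mul]
    have : (1 - r * x) * r = 0 := by linear_combination hx
    rw [this, map_zero]
  exact (hu.mul_right_eq_zero).1 this

lemma ker_RP (hreg : IsAbsolutelyFlat R) (P : PrimeSpectrum R) {r : R} :
    algebraMap R (Localization.AtPrime P.asIdeal) r = 0 ↔ r ∈ P.asIdeal := by
  refine ⟨fun h => ?_, kill_RP hreg P⟩
  by_contra hr
  have hu := IsLocalization.map_units (Localization.AtPrime P.asIdeal)
    (⟨r, hr⟩ : P.asIdeal.primeCompl)
  exact hu.ne_zero h

lemma smul_RP (hreg : IsAbsolutelyFlat R) (P : PrimeSpectrum R) {r : R} (hr : r ∈ P.asIdeal)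
    (x : Localization.AtPrime P.asIdeal) : r • x = 0 := by
  rw [Algebra.smul_def, kill_RP hreg P hr, zero_mul]

lemma maxl_of_reg (hreg : IsAbsolutelyFlat R) (P : PrimeSpectrum R) : P.asIdeal.IsMaximal := by
  rw [Ideal.isMaximal_iff]
  refine ⟨fun h => P.isPrime.ne_top ((Ideal.eq_top_iff_one _).2 h), fun J x hJ hx hxJ => ?_⟩
  obtain ⟨y, hy⟩ := hreg x
  have h0 : x * (1 - x * y) ∈ P.asIdeal := by
    have : x * (1 - x * y) = 0 := by linear_combination hy
    rw [this]; exact zero_mem _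
  have h1 := hJ ((P.isPrime.mem_or_mem h0).resolve_left hx)
  have := add_mem h1 (Ideal.mul_mem_right y _ hxJ)
  simpa using this

lemma surj_RP (hreg : IsAbsolutelyFlat R) (P : PrimeSpectrum R) :
    Function.Surjective (algebraMap R (Localization.AtPrime P.asIdeal)) := by
  intro z
  obtain ⟨⟨a, s⟩, h⟩ := IsLocalization.surj P.asIdeal.primeCompl z
  obtain ⟨y, hy⟩ := hreg s.1
  refine ⟨a * y, ?_⟩
  have hu := IsLocalization.map_units (Localization.AtPrime P.asIdeal) s
  have h2 : algebraMap R (Localization.AtPrime P.asIdeal) s.1 *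
      algebraMap R (Localization.AtPrime P.asIdeal) y = 1 := by
    apply hu.mul_left_cancel
    rw [← map_mul, ← map_mul, mul_one]
    congr 1
    linear_combination -hy
  simp only at h
  rw [map_mul, ← h, mul_assoc, h2, mul_one]

noncomputable def quotRP (hreg : IsAbsolutelyFlat R) (P : PrimeSpectrum R) :
    (R ⧸ P.asIdeal) ≃ₗ[R] Localization.AtPrime P.asIdeal :=
  (Submodule.quotEquivOfEq _ _ (by ext r; simpa using (ker_RP hreg P).symm)).trans
    (LinearMap.quotKerEquivOfSurjective (Algebra.linearMap R (Localization.AtPrime P.asIdeal))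
      (surj_RP hreg P))

lemma tens_PQ (hreg : IsAbsolutelyFlat R) {P Q : PrimeSpectrum R} (h : P ≠ Q) :
    Subsingleton (TensorProduct R (Localization.AtPrime P.asIdeal) (Localization.AtPrime Q.asIdeal)) := by
  obtain ⟨r, hr, hr'⟩ : ∃ r ∈ P.asIdeal, r ∉ Q.asIdeal := by
    by_contra! hc
    exact h (PrimeSpectrum.ext ((maxl_of_reg hreg P).eq_of_le Q.isPrime.ne_top hc))
  have hu := IsLocalization.map_units (Localization.AtPrime Q.asIdeal)
    (⟨r, hr'⟩ : Q.asIdeal.primeCompl)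
  refine subsingleton_of_forall_eq 0 (fun t => ?_)
  induction t using TensorProduct.induction_on with
  | zero => rfl
  | add a b ha hb => rw [ha, hb, add_zero]
  | tmul a b =>
    obtain ⟨c, hc⟩ := hu.dvd (a := b)
    have : b = r • c := by rw [Algebra.smul_def]; exact hc
    rw [this, ← TensorProduct.smul_tmul, smul_RP hreg P hr, TensorProduct.zero_tmul]

lemma tens_PP (P : PrimeSpectrum R) :
    Nontrivial (TensorProduct R (Localization.AtPrime P.asIdeal) (Localization.AtPrime P.asIdeal)) := by
  refine ⟨1 ⊗ₜ 1, 0, fun h => ?_⟩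
  have := congrArg (LinearMap.mul' R (Localization.AtPrime P.asIdeal)) h
  simp at this

lemma exists_functional (P : Ideal R) [hP : P.IsMaximal] {V : Type u} [AddCommGroup V] [Module R V]
    (hV : ∀ p ∈ P, ∀ v : V, p • v = 0) {z : V} (hz : z ≠ 0) :
    ∃ φ : V →ₗ[R] (R ⧸ P), φ z = 1 := by
  have ht : Module.IsTorsionBySet R V (P : Set R) := fun v p => hV p.1 p.2 v
  letI := Ideal.Quotient.field P
  letI : Module (R ⧸ P) V := ht.module
  haveI : IsScalarTower R (R ⧸ P) V := ht.isScalarTower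
  obtain ⟨f, hf⟩ : ∃ f : Module.Dual (R ⧸ P) V, f z ≠ 0 := by
    by_contra! hc
    exact hz ((Module.forall_dual_apply_eq_zero_iff (R ⧸ P) z).1 hc)
  exact ⟨((f z)⁻¹ • f).restrictScalars R, by simp [hf]⟩

end Alg

section Loc

lemma closure_loc {T : Type u} [Category.{v} T] [HasZeroObject T]
    [Preadditive T] [HasShift T ℤ] [∀ n : ℤ, (shiftFunctor T n).Additive] [Pretriangulated T]
    (S : Set T) : IsLocalizingSubcategory.{w} (localizingClosure.{w} S) where
  mem_of_iso e h L hL := hL.1.mem_of_iso e (h L hL)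
  shift_mem A n h L hL := hL.1.shift_mem A n (h L hL)
  cone_mem Tr hT h1 h2 L hL := hL.1.cone_mem Tr hT (h1 L hL) (h2 L hL)
  coproduct_mem f h c hc L hL := hL.1.coproduct_mem f (fun i => h i L hL) c hc

lemma zero_loc {T : Type u} [Category.{v} T] [HasZeroObject T]
    [Preadditive T] [HasShift T ℤ] [∀ n : ℤ, (shiftFunctor T n).Additive] [Pretriangulated T] :
    IsLocalizingSubcategory.{w} {X : T | IsZero X} where
  mem_of_iso e h := IsZero.of_iso h e.symm
  shift_mem A n h := (shiftFunctor T n).map_isZero h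
  cone_mem Tr hT h1 h2 := Triangle.isZero₃_of_isZero₁₂ Tr hT h1 h2
  coproduct_mem f h c hc := by
    rw [Set.mem_ofPred_eq, IsZero.iff_id_eq_zero]
    exact Cofan.IsColimit.hom_ext hc _ _ (fun i => (h i).eq_of_src _ _)

end Loc

section Fin

variable {R : Type u} [CommRing R] [HasDerivedCategory.{w} (ModuleCat.{u} R)]
variable {L : Set (DD R)}

abbrev RP (P : PrimeSpectrum R) : ModuleCat.{u} R := ModuleCat.of R (Localization.AtPrime P.asIdeal)

noncomputable abbrev S0 (Y : ModuleCat.{u} R) : DD R := (DerivedCategory.singleFunctor (ModuleCat.{u} R) 0).obj Y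

noncomputable def GG_single (Y Z : ModuleCat.{u} R) [Module.Flat R Y] :
    (GG Y).obj (S0 Z) ≅ S0 (Y ⊗ Z) :=
  ((tensorLeft Y).mapDerivedCategorySingleFunctor 0).app Z

lemma S0_zero (Y : ModuleCat.{u} R) : IsZero (S0 Y) ↔ IsZero Y := by
  refine ⟨fun h => ?_, fun h => Functor.map_isZero _ h⟩
  rw [IsZero.iff_id_eq_zero] at h ⊢
  apply (DerivedCategory.singleFunctor (ModuleCat.{u} R) 0).map_injective
  rw [CategoryTheory.Functor.map_id, h, Functor.map_zero]

lemma sigma_tau (hreg : IsAbsolutelyFlat R) (W : Set (PrimeSpectrum R)) (P : PrimeSpectrum R) :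
    (∃ A' : Ch R, (QQ R).obj A' ∈ localizingClosure.{u} {A | ∃ P ∈ W, A = residueFieldObj R P} ∧
        ¬ IsZero ((QQ R).obj ((tR A').obj (RP P)))) ↔ P ∈ W := by
  have := flat_of_reg hreg (RP P)
  constructor
  · rintro ⟨A, hA, hz⟩
    by_contra hP
    refine hz (IsZero.of_iso ?_ (GQ (RP P) A).symm)
    refine hA _ ⟨comap_loc zero_loc (RP P), ?_⟩
    rintro _ ⟨Q, hQ, rfl⟩
    refine IsZero.of_iso ((S0_zero _).2 ?_) (GG_single (RP P) (RP Q))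
    have := tens_PQ hreg (P := P) (Q := Q) (fun h => hP (h ▸ hQ))
    exact ModuleCat.isZero_of_subsingleton (ModuleCat.of R (TensorProduct R _ _))
  · intro hP
    obtain ⟨A, ⟨i⟩⟩ : ∃ B, Nonempty ((QQ R).obj B ≅ residueFieldObj R P) :=
      ⟨_, ⟨(QQ R).objObjPreimageIso _⟩⟩
    refine ⟨A, (closure_loc _).mem_of_iso i.symm (fun L hL => hL.2 ⟨P, hP, rfl⟩), fun hz => ?_⟩
    have h : IsZero (S0 (RP P ⊗ RP P)) :=
      IsZero.of_iso hz ((GG_single (RP P) (RP P)).symm ≪≫ (GG (RP P)).mapIso i.symm ≪≫ GQ _ _)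
    rw [S0_zero] at h
    have h2 := ModuleCat.subsingleton_of_isZero h
    have := tens_PP P
    exact not_subsingleton (TensorProduct R (Localization.AtPrime P.asIdeal) (Localization.AtPrime P.asIdeal)) h2

lemma Q_zero_of (B : Ch R) (h : ∀ n, ∀ x : B.X n, B.d n (n+1) x = 0 → ∃ y, B.d (n-1) n y = x) :
    IsZero ((QQ R).obj B) := by
  rw [IsZero.iff_id_eq_zero]
  have h1 : ∀ n, (HH R n).map (𝟙 ((QQ R).obj B)) = 0 := fun n => by
    rw [← CategoryTheory.Functor.map_id, HH_zero_iff, homologyMap_eq_zero_iff _ (n-1) n (n+1) (by ring) rfl]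
    intro x hx
    exact h n x hx
  have : IsIso (0 : (QQ R).obj B ⟶ (QQ R).obj B) := isIso_of_homology_id _ (fun n => by
    rw [Functor.map_zero, ← h1 n, CategoryTheory.Functor.map_id])
  rw [← cancel_mono (0 : (QQ R).obj B ⟶ (QQ R).obj B)]
  simp

lemma tau_sigma_le (hreg : IsAbsolutelyFlat R) (hL : IsLocalizingSubcategory.{u} L)
    (P : PrimeSpectrum R) (A : Ch R) (hA : (QQ R).obj A ∈ L)
    (hz : ¬ IsZero ((QQ R).obj ((tR A).obj (RP P)))) : residueFieldObj R P ∈ L := by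
  have hB := InC.of_mem hL hreg hA (RP P)
  have hmax := maxl_of_reg hreg P
  have hk : ∀ n, ∀ p ∈ P.asIdeal, ∀ v : ((tR A).obj (RP P)).X n, p • v = 0 := by
    intro n p hp v
    change TensorProduct R (Localization.AtPrime P.asIdeal) (A.X n) at v
    change (p • v : TensorProduct R (Localization.AtPrime P.asIdeal) (A.X n)) = 0
    induction v using TensorProduct.induction_on with
    | zero => exact smul_zero _
    | add a b ha hb => rw [smul_add, ha, hb, add_zero]
    | tmul a b => rw [TensorProduct.smul_tmul', smul_RP hreg P hp, TensorProduct.zero_tmul]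
  unfold InC at hB
  generalize (tR A).obj (RP P) = B at hB hz hk
  obtain ⟨n, z, hdz, hzb⟩ : ∃ n, ∃ z : B.X n, B.d n (n+1) z = 0 ∧ ∀ y, B.d (n-1) n y ≠ z := by
    by_contra! hc
    exact hz (Q_zero_of B hc)
  obtain ⟨φ, hφ⟩ := exists_functional P.asIdeal (V := B.X n ⧸ LinearMap.range (B.d (n-1) n).hom)
    (z := Submodule.Quotient.mk z) (by
      intro p hp v
      obtain ⟨v, rfl⟩ := Submodule.Quotient.mk_surjective _ v
      rw [← Submodule.Quotient.mk_smul, hk n p hp, Submodule.Quotient.mk_zero]) (by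
      rw [Ne, Submodule.Quotient.mk_eq_zero]
      rintro ⟨y, hy⟩
      exact hzb y hy)
  let K : ModuleCat.{u} R := ModuleCat.of R (R ⧸ P.asIdeal)
  let t : K ⟶ B.X n := ModuleCat.ofHom (Submodule.liftQ P.asIdeal (LinearMap.toSpanSingleton R (B.X n) z)
    (fun p hp => hk n p hp z))
  let s : B.X n ⟶ K := ModuleCat.ofHom (φ ∘ₗ Submodule.mkQ _)
  have hts : t ≫ s = 𝟙 K := by
    refine ModuleCat.hom_ext (LinearMap.ext fun x => ?_)
    obtain ⟨x, rfl⟩ := Submodule.Quotient.mk_surjective _ x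
    change φ (Submodule.Quotient.mk (x • z)) = _
    rw [Submodule.Quotient.mk_smul, map_smul, hφ]
    change x • (Ideal.Quotient.mk P.asIdeal 1) = Ideal.Quotient.mk P.asIdeal x
    rw [← Ideal.Quotient.mkₐ_eq_mk R, ← map_smul]; simp
  have ht : ∀ k, (ComplexShape.up ℤ).Rel n k → t ≫ B.d n k = 0 := by
    intro k hk
    have hk : n + 1 = k := hk
    subst hk
    refine ModuleCat.hom_ext (LinearMap.ext fun x => ?_)
    obtain ⟨x, rfl⟩ := Submodule.Quotient.mk_surjective _ x
    change B.d n (n + 1) (x • z) = 0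
    rw [map_smul, hdz, smul_zero]
  have hs : ∀ k, (ComplexShape.up ℤ).Rel k n → B.d k n ≫ s = 0 := by
    intro k hk
    have hk : k + 1 = n := hk
    obtain rfl : k = n - 1 := by omega
    ext x
    change φ (Submodule.Quotient.mk (B.d (n-1) n x)) = 0
    have h0 : B.d (n-1) n x ∈ LinearMap.range (B.d (n-1) n).hom := LinearMap.mem_range_self _ x
    rw [(Submodule.Quotient.mk_eq_zero _).2 h0, map_zero]
  let i := HomologicalComplex.mkHomFromSingle t ht
  let r := HomologicalComplex.mkHomToSingle s hs
  have hir : i ≫ r = 𝟙 _ := by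
    apply HomologicalComplex.from_single_hom_ext
    rw [HomologicalComplex.comp_f, HomologicalComplex.mkHomFromSingle_f, HomologicalComplex.mkHomToSingle_f]
    rw [Category.assoc, reassoc_of% hts]
    simp
  have h1 := hL.retract_mem ((QQ R).map i) ((QQ R).map r) (by
    rw [← Functor.map_comp, hir, CategoryTheory.Functor.map_id]) hB
  rw [single_mem hL] at h1
  exact hL.mem_of_iso ((DerivedCategory.singleFunctor (ModuleCat.{u} R) 0).mapIso
    (quotRP hreg P).toModuleIso) h1

lemma InC_all (hreg : IsAbsolutelyFlat R) (hL : IsLocalizingSubcategory.{u} L)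
    (P : PrimeSpectrum R) (h : residueFieldObj R P ∈ L) (A : Ch R) : InC L A (RP P) := by
  have := flat_of_reg hreg (RP P)
  refine hL.mem_of_iso (GQ (RP P) A) (gen_univ (comap_loc hL (RP P)) ?_ _)
  exact hL.mem_of_iso ((DerivedCategory.singleFunctor (ModuleCat.{u} R) 0).mapIso
    (ρ_ (RP P)).symm ≪≫ (GG_single _ _).symm) h

lemma semiart (hreg : IsAbsolutelyFlat R) (hsa : IsSemiArtinianRing R)
    (hL : IsLocalizingSubcategory.{u} L) (A : Ch R) (h : ∀ P, InC L A (RP P)) :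
    (QQ R).obj A ∈ L := by
  rw [← one_mem_idealC hL hreg A]
  by_contra h1
  obtain ⟨J, hJ⟩ : ∃ J, J = idealC hL hreg A := ⟨_, rfl⟩
  have hJm : ∀ r, r ∈ J ↔ InC L A (ModuleCat.of R (Ideal.span {r})) := fun r => by rw [hJ]; rfl
  obtain ⟨S, hS⟩ := hsa J (fun hJt => h1 (by rw [← hJ, hJt]; trivial))
  obtain ⟨I, hI, ⟨e⟩⟩ := isSimpleModule_iff_quot_maximal.1 hS
  let P : PrimeSpectrum R := ⟨I, hI.isPrime⟩
  have hSC : InC L A (ModuleCat.of R S) :=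
    InC.iso hL (LinearEquiv.toModuleIso ((quotRP hreg P).symm.trans e.symm)) (h P)
  have := hS.nontrivial
  obtain ⟨⟨sb, hsb⟩, hne⟩ := exists_ne (0 : S)
  obtain ⟨s, rfl⟩ := Ideal.Quotient.mk_surjective sb
  have hsJ : s ∉ J := fun hs => hne (Subtype.ext (Ideal.Quotient.eq_zero_iff_mem.2 hs))
  apply hsJ
  rw [hJm]
  let f : Ideal.span {s} →ₗ[R] S := LinearMap.codRestrict S (J.mkQ ∘ₗ (Ideal.span {s}).subtype) (by
    rintro ⟨z, hz⟩
    obtain ⟨b, rfl⟩ := Ideal.mem_span_singleton'.1 hz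
    have := S.smul_mem b hsb
    exact this)
  have hf0 : f ≠ 0 := fun h0 => hne (LinearMap.congr_fun h0 ⟨s, Ideal.mem_span_singleton_self s⟩)
  have hf : Function.Surjective f := LinearMap.surjective_of_ne_zero hf0
  refine InC.ses₂ hL hreg (S := f.shortComplexKer) (LinearMap.shortExact_shortComplexKer hf) ?_ hSC
  refine InC.local hL hreg J (fun e he => (hJm e).1 he) _ ?_
  rintro ⟨⟨y, hy⟩, hk⟩
  have hyJ : y ∈ J := Ideal.Quotient.eq_zero_iff_mem.1 (congrArg Subtype.val hk)
  obtain ⟨x, hx⟩ := hreg y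
  refine ⟨y * x, J.mul_mem_right _ hyJ, Subtype.ext (Subtype.ext ?_)⟩
  change y * x * y = y
  linear_combination -hx

end Fin

theorem statement18 (R : Type u) [CommRing R] [HasDerivedCategory.{w} (ModuleCat.{u} R)]
    (hreg : IsAbsolutelyFlat R) (hsa : IsSemiArtinianRing R)
    (tau : Set (PrimeSpectrum R) → Set (DerivedCategory (ModuleCat.{u} R)))
    (htau : ∀ W, tau W = localizingClosure.{u}
      {A | ∃ P ∈ W, A = residueFieldObj R P})
    (sigma : Set (DerivedCategory (ModuleCat.{u} R)) → Set (PrimeSpectrum R))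
    (hsigma : ∀ L, sigma L = {P | ∃ A' : CochainComplex (ModuleCat.{u} R) ℤ,
      DerivedCategory.Q.obj A' ∈ L ∧
        ¬ IsZero (DerivedCategory.Q.obj (tensorResidueField R P A'))}) :
    (∀ W, IsLocalizingSubcategory.{u} (tau W)) ∧
      (∀ W, sigma (tau W) = W) ∧
      (∀ L, IsLocalizingSubcategory.{u} L → tau (sigma L) = L) ∧
      (∀ W W' : Set (PrimeSpectrum R), W ⊆ W' → tau W ⊆ tau W') ∧
      (∀ L L' : Set (DerivedCategory (ModuleCat.{u} R)), L ⊆ L' → sigma L ⊆ sigma L') := by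
  have hloc : ∀ W, IsLocalizingSubcategory.{u} (tau W) := fun W => by
    rw [htau]; exact closure_loc _
  have hsm : ∀ L L' : Set (DerivedCategory (ModuleCat.{u} R)), L ⊆ L' → sigma L ⊆ sigma L' := by
    intro L L' h
    rw [hsigma, hsigma]
    rintro P ⟨A, hA, hz⟩
    exact ⟨A, h hA, hz⟩
  refine ⟨hloc, fun W => ?_, fun L hL => ?_, fun W W' h => ?_, hsm⟩
  · rw [hsigma, htau]
    ext P
    exact sigma_tau hreg W P
  · apply Set.Subset.antisymm
    · rw [htau]
      refine Set.sInter_subset_of_mem ⟨hL, ?_⟩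
      rintro _ ⟨P, hP, rfl⟩
      rw [hsigma] at hP
      obtain ⟨A, hA, hz⟩ := hP
      exact tau_sigma_le hreg hL P A hA hz
    · intro X hX
      obtain ⟨A, ⟨i⟩⟩ : ∃ B, Nonempty ((QQ R).obj B ≅ X) := ⟨_, ⟨(QQ R).objObjPreimageIso X⟩⟩
      refine (hloc _).mem_of_iso i (semiart hreg hsa (hloc _) A (fun P => ?_))
      by_cases hP : P ∈ sigma L
      · refine InC_all hreg (hloc _) P ?_ A
        rw [htau]
        exact fun L' hL' => hL'.2 ⟨P, hP, rfl⟩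
      · refine (hloc _).zero_mem ?_
        by_contra hz
        apply hP
        rw [hsigma]
        exact ⟨A, hL.mem_of_iso i.symm hX, hz⟩
  · rw [htau, htau]
    refine Set.sInter_subset_sInter (fun L hL => ⟨hL.1, ?_⟩)
    rintro _ ⟨P, hP, rfl⟩
    exact hL.2 ⟨P, h hP, rfl⟩
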